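/- arXiv:1805.11448 — 3 statements merged into one kernel-verified Lean document; each statement's English description precedes it below -/
import Mathlib

section
/- Let 𝕜 be a field and R = 𝕜[y]. Let σ be the endomorphism of R with σ(r) = r for all r ∈ 𝕜 and σ(y) = p(y), where p(y) is a polynomial in y of degree greater than 1, and let δ be a σ-derivation with δ(a) = 0 for all a ∈ 𝕜. If a is an element of S = R[x;σ,δ] with a ∉ 𝕜, then C_S(a) is a free 𝕜[a]-module of finite rank. -/
open Finsupp

noncomputable section

variable {R S : Type*}

/-- `S` is the Ore extension `R[x; σ, δ]` of `R` (embedded in `S` via `ι`):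
`δ` is a `σ`-derivation of `R`, `S` is a free left `R`-module with basis `1, x, x², …`,
and `x * r = σ(r) * x + δ(r)` for all `r ∈ R`. -/
structure IsOreExtension [Ring R] [Ring S] (ι : R →+* S) (σ : R →+* R) (δ : R → R)
    (x : S) : Prop where
  deriv_add : ∀ a b : R, δ (a + b) = δ a + δ b
  deriv_mul : ∀ a b : R, δ (a * b) = σ a * δ b + δ a * b
  repr_uniq : ∀ s : S, ∃! c : ℕ →₀ R, s = c.sum fun i r => ι r * x ^ i
  comm_rule : ∀ r : R, x * ι r = ι (σ r) * x + ι (δ r)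

/-- The (unique) coefficient family of `s` with respect to the basis `1, x, x², …`. -/
def oreCoeff [Ring R] [Ring S] {ι : R →+* S} {σ : R →+* R} {δ : R → R} {x : S}
    (h : IsOreExtension ι σ δ x) (s : S) : ℕ →₀ R :=
  (h.repr_uniq s).exists.choose

/-- The degree (in `x`) of an element of the Ore extension. -/
def oreDeg [Ring R] [Ring S] {ι : R →+* S} {σ : R →+* R} {δ : R → R} {x : S}
    (h : IsOreExtension ι σ δ x) (s : S) : ℕ :=
  (oreCoeff h s).support.sup id

/-- The leading coefficient (in `x`) of an element of the Ore extension. -/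
def oreLeadCoeff [Ring R] [Ring S] {ι : R →+* S} {σ : R →+* R} {δ : R → R} {x : S}
    (h : IsOreExtension ι σ δ x) (s : S) : R :=
  oreCoeff h s (oreDeg h s)

/-- The centralizer of `a`: all elements commuting with `a`. -/
def centralizerOf [Ring S] (a : S) : Set S := {b | b * a = a * b}

/-- The set of "polynomials in `P` with coefficients in `F`", i.e. all finite sums
`Σ_j ι(b_j) * P^j` with every `b_j ∈ F`. -/
def polysIn [Ring R] [Ring S] (ι : R →+* S) (F : Set R) (P : S) : Set S :=
  {s | ∃ d : ℕ →₀ R, (∀ j, d j ∈ F) ∧ s = d.sum fun j b => ι b * P ^ j}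

/-- The subset `M` of `S` is a free module of rank at most `nbound` over the coefficient
subring `coeffs ⊆ S` (acting by left multiplication). -/
def IsFreeModuleOfRankAtMost [Ring S] (coeffs : Set S) (M : Set S) (nbound : ℕ) : Prop :=
  ∃ m ≤ nbound, ∃ u : Fin m → S, (∀ i, u i ∈ M) ∧
    ∀ e ∈ M, ∃! c : Fin m → S, (∀ i, c i ∈ coeffs) ∧ e = ∑ i, c i * u i

/-- The subset `M` of `S` is a free module of finite rank over the coefficient
subring `coeffs ⊆ S` (acting by left multiplication). -/
def IsFreeModuleOfFiniteRank [Ring S] (coeffs : Set S) (M : Set S) : Prop :=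
  ∃ m : ℕ, ∃ u : Fin m → S, (∀ i, u i ∈ M) ∧
    ∀ e ∈ M, ∃! c : Fin m → S, (∀ i, c i ∈ coeffs) ∧ e = ∑ i, c i * u i

/-- A subset `F` of a ring is a field (with the induced operations): it is nontrivial and
every nonzero element of `F` has a multiplicative inverse lying in `F`. -/
def IsFieldSubset [Ring R] (F : Set R) : Prop :=
  (0 : R) ≠ 1 ∧ ∀ a ∈ F, a ≠ 0 → ∃ b ∈ F, a * b = 1

open Polynomial in
theorem abs_unique {K A I : Type*} [Field K] [Ring A] [Algebra K A] [Fintype I]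
    (d : A → WithBot ℕ) (h0 : ∀ b, d b = ⊥ ↔ b = 0)
    (hadd : ∀ b c, d (b + c) ≤ max (d b) (d c))
    (f : I → A) (hf : ∀ i j, f i ≠ 0 → d (f i) = d (f j) → i = j)
    (hneg : ∀ b, d (-b) = d b)
    (hs : ∑ i, f i = 0) : ∀ i, f i = 0 := by
  classical
  by_contra hcon
  push Not at hcon
  obtain ⟨i1, hi1⟩ := hcon
  obtain ⟨i, -, hi⟩ := Finset.exists_max_image Finset.univ (fun i => d (f i)) ⟨i1, Finset.mem_univ _⟩
  have hine : f i ≠ 0 := by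
    intro hz
    have := hi i1 (Finset.mem_univ _)
    rw [(h0 (f i)).2 hz] at this
    exact hi1 ((h0 _).1 (le_bot_iff.1 this))
  have hbot : ⊥ < d (f i) := bot_lt_iff_ne_bot.2 (fun hb => hine ((h0 _).1 hb))
  have key : ∀ s : Finset I, i ∉ s → d (∑ j ∈ s, f j) < d (f i) := by
    intro s
    induction s using Finset.induction_on with
    | empty => intro _; simpa [(h0 0).2 rfl] using hbot
    | insert j s hj ih =>
      intro hn
      simp only [Finset.mem_insert, not_or] at hn
      rw [Finset.sum_insert hj]
      refine lt_of_le_of_lt (hadd _ _) (max_lt ?_ (ih hn.2))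
      refine lt_of_le_of_ne (hi j (Finset.mem_univ _)) (fun he => hn.1 (hf i j hine he.symm))
  have h1 := key (Finset.univ.erase i) (by simp)
  rw [← Finset.add_sum_erase _ _ (Finset.mem_univ i)] at hs
  rw [← neg_eq_of_add_eq_zero_right hs, hneg] at h1
  exact lt_irrefl _ h1

open Polynomial in
theorem abs_main {K A : Type*} [Field K] [Ring A] [Algebra K A]
    (d : A → WithBot ℕ) (h0 : ∀ b, d b = ⊥ ↔ b = 0)
    (hadd : ∀ b c, d (b + c) ≤ max (d b) (d c))
    (hmul : ∀ b c, d (b * c) = d b + d c)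
    (hsmul : ∀ (k : K) b, k ≠ 0 → d (k • b) = d b)
    (hlead : ∀ b c, b ≠ 0 → c ≠ 0 → d b = d c → ∃ k : K, d (b - k • c) < d b)
    (a : A) (n : ℕ) (hn : 0 < n) (hdn : d a = n) :
    ∃ m : ℕ, ∃ u : Fin m → A, ∀ e : A, ∃! c : Fin m → K[X], e = ∑ i, aeval a (c i) * u i := by
  classical
  have hneg : ∀ b, d (-b) = d b := fun b => by
    have := hsmul (-1) b (by simp)
    simpa using this
  have ha0 : a ≠ 0 := by
    intro hz; rw [(h0 a).2 hz] at hdn; exact absurd hdn (by simp)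
  have hnt : (1 : A) ≠ 0 := by
    intro hz; apply ha0; rw [← mul_one a, hz, mul_zero]
  have hd1 : d 1 = 0 := by
    have h1 := hmul 1 1
    rw [mul_one] at h1
    obtain ⟨k, hk⟩ := WithBot.ne_bot_iff_exists.1 (fun hb => hnt ((h0 1).1 hb))
    rw [← hk, ← WithBot.coe_add, WithBot.coe_inj] at h1
    rw [← hk, show k = 0 by omega]
    rfl
  have hpow : ∀ q : ℕ, d (a ^ q) = ((n * q : ℕ) : WithBot ℕ) := by
    intro q
    induction q with
    | zero => simp [hd1]
    | succ q ih => rw [pow_succ, hmul, ih, hdn]; norm_cast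
  have hnat : ∀ b, b ≠ 0 → ∃ k : ℕ, d b = k := fun b hb => by
    obtain ⟨k, hk⟩ := WithBot.ne_bot_iff_exists.1 (fun hb' => hb ((h0 b).1 hb'))
    exact ⟨k, hk.symm⟩
  let Q : ℕ → ℕ → Prop := fun r k => k % n = r ∧ ∃ b, d b = (k : WithBot ℕ)
  let I := {r : Fin n // ∃ k, Q r k}
  let v : I → ℕ := fun r => Nat.find r.2
  have hv : ∀ r : I, Q r.1 (v r) := fun r => Nat.find_spec r.2
  have hvmin : ∀ (r : I) k, Q r.1 k → v r ≤ k := fun r k hk => Nat.find_min' r.2 hk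
  choose w hw using fun r : I => (hv r).2
  have hw0 : ∀ r, w r ≠ 0 := fun r hz => by
    have := hw r
    rw [(h0 _).2 hz] at this; exact absurd this (by simp)
  have hterm : ∀ (r : I) (q : ℕ), d (a ^ q * w r) = ((n * q + v r : ℕ) : WithBot ℕ) := by
    intro r q
    rw [hmul, hpow, hw]; norm_cast
  have hex : ∀ N : ℕ, ∀ e : A, d e < (N : WithBot ℕ) →
      ∃ c : I → K[X], e = ∑ i, aeval a (c i) * w i := by
    intro N
    induction N with
    | zero =>
      intro e he
      refine ⟨fun _ => 0, ?_⟩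
      have : d e = ⊥ := by
        by_contra hb
        obtain ⟨k, hk⟩ := WithBot.ne_bot_iff_exists.1 hb
        rw [← hk] at he
        norm_cast at he
      simp [(h0 e).1 this]
    | succ N ih =>
      intro e he
      by_cases hz : e = 0
      · exact ⟨fun _ => 0, by simp [hz]⟩
      obtain ⟨k, hk⟩ := hnat e hz
      let r : I := ⟨⟨k % n, Nat.mod_lt _ hn⟩, k, rfl, e, hk⟩
      have h1 : v r ≤ k := hvmin r k ⟨rfl, e, hk⟩
      have h2 : v r % n = k % n := (hv r).1
      obtain ⟨q, hq⟩ := (Nat.modEq_iff_dvd' h1).1 h2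
      have h3 : d (a ^ q * w r) = (k : WithBot ℕ) := by
        rw [hterm]; congr 1; omega
      have h4 : a ^ q * w r ≠ 0 := fun hz => by
        rw [(h0 _).2 hz] at h3; exact absurd h3 (by simp)
      obtain ⟨l, hl⟩ := hlead e (a ^ q * w r) hz h4 (by rw [hk, h3])
      have h5 : d (e - l • (a ^ q * w r)) < (N : WithBot ℕ) := by
        refine lt_of_lt_of_le hl ?_
        rw [hk] at he ⊢
        norm_cast at he ⊢
        omega
      obtain ⟨c, hc⟩ := ih _ h5
      refine ⟨fun i => c i + if i = r then C l * X ^ q else 0, ?_⟩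
      rw [sub_eq_iff_eq_add] at hc
      rw [hc]
      simp only [map_add, add_mul, Finset.sum_add_distrib]
      congr 1
      rw [Finset.sum_eq_single r]
      · simp [Algebra.smul_def, mul_assoc]
      · intro b _ hb; simp [hb]
      · simp
  have huniq : ∀ c : I → K[X], ∑ i, aeval a (c i) * w i = 0 → c = 0 := by
    intro c hc
    obtain ⟨N, hN⟩ : ∃ N : ℕ, ∀ i, (c i).natDegree < N :=
      ⟨(Finset.univ.sup fun i => (c i).natDegree) + 1, fun i =>
        Nat.lt_succ_of_le (Finset.le_sup (f := fun i => (c i).natDegree) (Finset.mem_univ i))⟩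
    have h1 := abs_unique (K := K) (I := I × Fin N) d h0 hadd
      (fun ij => (c ij.1).coeff ij.2 • (a ^ (ij.2 : ℕ) * w ij.1)) ?_ hneg ?_
    · funext i
      ext j
      by_cases hj : j < N
      · have h2 := h1 (i, ⟨j, hj⟩)
        by_contra hne
        have h3 := hsmul _ (a ^ j * w i) hne
        rw [h2, hterm, (h0 0).2 rfl] at h3
        exact WithBot.bot_ne_coe h3
      · rw [coeff_eq_zero_of_natDegree_lt (lt_of_lt_of_le (hN i) (not_lt.1 hj))]; simp
    · rintro ⟨i, j⟩ ⟨i', j'⟩ hne heq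
      simp only at hne heq
      have hc1 : (c i).coeff j ≠ 0 := fun hz => hne (by simp [hz])
      have hc2 : (c i').coeff j' ≠ 0 := fun hz => by
        rw [hz, zero_smul, (h0 0).2 rfl] at heq
        exact hne ((h0 _).1 heq)
      rw [hsmul _ _ hc1, hsmul _ _ hc2, hterm, hterm] at heq
      norm_cast at heq
      have h2 : i = i' := by
        apply Subtype.ext
        apply Fin.ext
        have e1 := (hv i).1
        have e2 := (hv i').1
        rw [← e1, ← e2]
        have := congrArg (· % n) heq
        simpa using this
      subst h2
      have h3 : n * (j : ℕ) = n * j' := by omega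
      have h4 := Nat.eq_of_mul_eq_mul_left hn h3
      rw [Fin.ext h4]
    · rw [Fintype.sum_prod_type, ← hc]
      refine Finset.sum_congr rfl fun i _ => ?_
      rw [aeval_eq_sum_range' (hN i), Finset.sum_mul, ← Fin.sum_univ_eq_sum_range
        (fun j => ((c i).coeff j • a ^ j) * w i)]
      simp
  let eqv := Fintype.equivFin I
  refine ⟨Fintype.card I, fun i => w (eqv.symm i), fun e => ?_⟩
  have hre : ∀ c : Fin (Fintype.card I) → K[X],
      ∑ i, aeval a (c i) * w (eqv.symm i) = ∑ i, aeval a (c (eqv i)) * w i := by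
    intro c
    rw [← Equiv.sum_comp eqv]
    simp
  obtain ⟨c, hc⟩ : ∃ c : I → K[X], e = ∑ i, aeval a (c i) * w i := by
    by_cases hz : e = 0
    · exact ⟨fun _ => 0, by simp [hz]⟩
    obtain ⟨k, hk⟩ := hnat e hz
    exact hex (k + 1) e (by rw [hk]; norm_cast; omega)
  refine ⟨fun i => c (eqv.symm i), ?_, ?_⟩
  · simp only []
    rw [hre]; simpa using hc
  · intro c' hc'
    simp only [] at hc'
    rw [hre] at hc'
    have := huniq (fun i => c' (eqv i) - c i) (by
      simp only [map_sub, sub_mul, Finset.sum_sub_distrib]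
      rw [← hc', ← hc, sub_self])
    funext i
    have h2 := congrFun this (eqv.symm i)
    simpa [sub_eq_zero] using h2

open Polynomial in
theorem abs_transfer {K A S : Type*} [Field K] [Ring A] [Algebra K A] [Ring S]
    (ι : K[X] →+* S) (f : A →+* S) (hf : Function.Injective f)
    (hfk : ∀ k : K, f (algebraMap K A k) = ι (C k)) (a : S) (a' : A) (ha : f a' = a)
    (hr : ∀ b : S, b ∈ centralizerOf a ↔ ∃ b', f b' = b)
    (H : ∃ m : ℕ, ∃ u : Fin m → A, ∀ e : A, ∃! c : Fin m → K[X],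
      e = ∑ i, aeval a' (c i) * u i) :
    IsFreeModuleOfFiniteRank (polysIn ι {r : K[X] | ∃ c : K, r = C c} a)
      (centralizerOf a) := by
  have hval : ∀ c : K[X], f (aeval a' c) = c.sum fun j k => ι (C k) * a ^ j := by
    intro c
    rw [aeval_def, eval₂_eq_sum, Polynomial.sum, Polynomial.sum, map_sum]
    simp [hfk, ha]
  have hpoly : ∀ s : S, s ∈ polysIn ι {r : K[X] | ∃ c : K, r = C c} a ↔
      ∃ c : K[X], f (aeval a' c) = s := by
    intro s
    constructor
    · rintro ⟨d, hd, rfl⟩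
      choose k hk using hd
      refine ⟨∑ j ∈ d.support, monomial j (k j), ?_⟩
      rw [map_sum, map_sum, Finsupp.sum]
      refine Finset.sum_congr rfl fun j _ => ?_
      rw [hval, sum_monomial_index _ _ (by simp), hk j]
    · rintro ⟨c, rfl⟩
      refine ⟨Finsupp.onFinset c.support (fun j => C (c.coeff j)) (by
        intro j hj; simpa using hj), fun j => ⟨_, rfl⟩, ?_⟩
      rw [hval, Finsupp.onFinset_sum _ (by simp)]
      rfl
  obtain ⟨m, u, hu⟩ := H
  refine ⟨m, fun i => f (u i), fun i => (hr _).2 ⟨_, rfl⟩, fun e he => ?_⟩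
  obtain ⟨e', rfl⟩ := (hr _).1 he
  obtain ⟨c, hc, hcu⟩ := hu e'
  refine ⟨fun i => f (aeval a' (c i)), ⟨fun i => (hpoly _).2 ⟨_, rfl⟩, ?_⟩, ?_⟩
  · conv_lhs => rw [hc]
    simp
  · rintro c' ⟨h1, h2⟩
    choose c2 hc2 using fun i => (hpoly _).1 (h1 i)
    have : c2 = c := hcu c2 (by
      apply hf
      rw [h2]; simp [hc2])
    funext i
    rw [← hc2, this]

open Polynomial in
/-- `s` is represented by a polynomial of degree at most `n` whose `n`th coefficient is `r`. -/
def HasLead {T S : Type*} [Ring T] [Ring S] (ι : T →+* S) (x : S) (s : S) (n : ℕ) (r : T) : Prop :=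
  ∃ q : T[X], eval₂ ι x q = s ∧ q.natDegree ≤ n ∧ q.coeff n = r

section lead
open Polynomial
variable {T U : Type*} [Ring T] [Ring U] {ι : T →+* U} {x : U}

theorem HasLead.add {s t : U} {n : ℕ} {r r' : T} (h1 : HasLead ι x s n r)
    (h2 : HasLead ι x t n r') : HasLead ι x (s + t) n (r + r') := by
  obtain ⟨q, rfl, hq, rfl⟩ := h1
  obtain ⟨q', rfl, hq', rfl⟩ := h2
  exact ⟨q + q', eval₂_add _ _, natDegree_add_le_of_degree_le hq hq', coeff_add _ _ _⟩

theorem HasLead.lift {s : U} {n m : ℕ} {r : T} (h1 : HasLead ι x s n r) (hm : n < m) :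
    HasLead ι x s m 0 := by
  obtain ⟨q, rfl, hq, rfl⟩ := h1
  exact ⟨q, rfl, by omega, coeff_eq_zero_of_natDegree_lt (by omega)⟩

theorem HasLead.smul {s : U} {n : ℕ} {r : T} (h1 : HasLead ι x s n r) (b : T) :
    HasLead ι x (ι b * s) n (b * r) := by
  obtain ⟨q, rfl, hq, rfl⟩ := h1
  refine ⟨C b * q, ?_, (natDegree_C_mul_le _ _).trans hq, by simp⟩
  clear hq
  induction q using Polynomial.induction_on' with
  | add p q hp' hq' => rw [mul_add, eval₂_add, eval₂_add, hp', hq', mul_add]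
  | monomial n c => rw [C_mul_monomial, eval₂_monomial, eval₂_monomial, map_mul, mul_assoc]

theorem HasLead.const (b : T) : HasLead ι x (ι b) 0 b :=
  ⟨C b, by simp, by simp, by simp⟩

theorem HasLead.mul_x {s : U} {n : ℕ} {r : T} (h1 : HasLead ι x s n r) :
    HasLead ι x (s * x) (n + 1) r := by
  obtain ⟨q, rfl, hq, rfl⟩ := h1
  exact ⟨q * X, eval₂_mul_X _ _, (natDegree_mul_le.trans (add_le_add hq natDegree_X_le)), by simp⟩

theorem HasLead.zero {s : U} {r : T} (h1 : HasLead ι x s 0 r) : s = ι r := by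
  obtain ⟨q, rfl, hq, rfl⟩ := h1
  rw [eq_C_of_natDegree_le_zero hq]; simp

theorem HasLead.succ {s : U} {n : ℕ} {r : T} (h1 : HasLead ι x s (n + 1) r) :
    ∃ s' c, s = s' * x + ι c ∧ HasLead ι x s' n r := by
  obtain ⟨q, rfl, hq, rfl⟩ := h1
  refine ⟨eval₂ ι x q.divX, q.coeff 0, ?_, q.divX, rfl, ?_, ?_⟩
  · conv_lhs => rw [← divX_mul_X_add q]
    rw [eval₂_add, eval₂_mul_X, eval₂_C]
  · rw [natDegree_divX_eq_natDegree_tsub_one]; omega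
  · rw [coeff_divX]

theorem HasLead.x_mul {σ : T →+* T} {δ : T → T} (hc : ∀ r, x * ι r = ι (σ r) * x + ι (δ r))
    {s : U} {n : ℕ} {r : T} (h1 : HasLead ι x s n r) :
    HasLead ι x (x * s) (n + 1) (σ r) := by
  have h0 : ∀ c, HasLead ι x (x * ι c) 1 (σ c) := fun c => by
    rw [hc]
    simpa using ((HasLead.const (σ c)).mul_x).add ((HasLead.const (δ c)).lift one_pos)
  induction n generalizing s with
  | zero => rw [h1.zero]; exact h0 r
  | succ n ih =>
    obtain ⟨s', c, rfl, h2⟩ := h1.succ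
    rw [mul_add, ← mul_assoc]
    simpa using ((ih h2).mul_x).add ((h0 c).lift (by omega))

theorem HasLead.mul {σ : T →+* T} {δ : T → T} (hc : ∀ r, x * ι r = ι (σ r) * x + ι (δ r))
    {s t : U} {m n : ℕ} {r r' : T} (h1 : HasLead ι x s m r) (h2 : HasLead ι x t n r') :
    HasLead ι x (s * t) (m + n) (r * (σ^[m] r')) := by
  induction m generalizing s t n r' with
  | zero => rw [h1.zero]; simpa using h2.smul r
  | succ m ih =>
    obtain ⟨s', c, rfl, h3⟩ := h1.succ
    rw [add_mul, mul_assoc]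
    have := (ih h3 (h2.x_mul hc)).add ((h2.smul c).lift (show n < m + (n + 1) by omega))
    simpa [add_assoc, add_comm 1 n] using this

theorem ore_bij {σ : T →+* T} {δ : T → T} (h : IsOreExtension ι σ δ x) :
    Function.Bijective (fun q : T[X] => eval₂ ι x q) := by
  have key : ∀ q : T[X], eval₂ ι x q = q.toFinsupp.coeff.sum fun i r => ι r * x ^ i := by
    intro q; rw [eval₂_eq_sum]; rfl
  constructor
  · intro q q' hq
    simp only [] at hq
    have := (h.repr_uniq (eval₂ ι x q)).unique (key q) (hq.trans (key q'))
    exact toFinsupp_injective (AddMonoidAlgebra.coeff_injective this)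
  · intro s
    obtain ⟨c, hc, -⟩ := h.repr_uniq s
    exact ⟨⟨⟨c⟩⟩, (key _).trans hc.symm⟩

/-- degree in `x`. -/
def xdeg {σ : T →+* T} {δ : T → T} (h : IsOreExtension ι σ δ x) (s : U) : WithBot ℕ :=
  ((Equiv.ofBijective _ (ore_bij h)).symm s).degree

theorem xdeg_eval {σ : T →+* T} {δ : T → T} (h : IsOreExtension ι σ δ x) (q : T[X]) :
    xdeg h (eval₂ ι x q) = q.degree := by
  unfold xdeg
  congr 1
  exact (Equiv.ofBijective _ (ore_bij h)).symm_apply_apply q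

theorem xdeg_bot {σ : T →+* T} {δ : T → T} (h : IsOreExtension ι σ δ x) (s : U) :
    xdeg h s = ⊥ ↔ s = 0 := by
  obtain ⟨q, rfl⟩ := (ore_bij h).2 s
  simp only []
  rw [xdeg_eval, degree_eq_bot]
  constructor
  · rintro rfl; simp
  · intro hq; exact (ore_bij h).1 (by simpa using hq)

theorem xdeg_add {σ : T →+* T} {δ : T → T} (h : IsOreExtension ι σ δ x) (s t : U) :
    xdeg h (s + t) ≤ max (xdeg h s) (xdeg h t) := by
  obtain ⟨q, rfl⟩ := (ore_bij h).2 s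
  obtain ⟨q', rfl⟩ := (ore_bij h).2 t
  simp only []
  rw [← eval₂_add, xdeg_eval, xdeg_eval, xdeg_eval]
  exact degree_add_le _ _

theorem HasLead.xdeg_eq {σ : T →+* T} {δ : T → T} (h : IsOreExtension ι σ δ x) {s : U} {n : ℕ}
    {r : T} (h1 : HasLead ι x s n r) (hr : r ≠ 0) : xdeg h s = n := by
  obtain ⟨q, rfl, hq, rfl⟩ := h1
  rw [xdeg_eval]
  exact degree_eq_of_le_of_coeff_ne_zero (natDegree_le_iff_degree_le.1 hq) hr

theorem HasLead.xdeg_lt {σ : T →+* T} {δ : T → T} (h : IsOreExtension ι σ δ x) {s : U} {n : ℕ}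
    (h1 : HasLead ι x s n 0) : xdeg h s < n := by
  obtain ⟨q, rfl, hq, hr⟩ := h1
  rw [xdeg_eval]
  rw [degree_lt_iff_coeff_zero]
  intro m hm
  rcases eq_or_lt_of_le hm with rfl | hm
  · exact hr
  · exact coeff_eq_zero_of_natDegree_lt (by omega)

theorem HasLead.uniq {σ : T →+* T} {δ : T → T} (h : IsOreExtension ι σ δ x) {s : U} {n : ℕ}
    {r r' : T} (h1 : HasLead ι x s n r) (h2 : HasLead ι x s n r') : r = r' := by
  obtain ⟨q, rfl, hq, rfl⟩ := h1
  obtain ⟨q', h3, hq', rfl⟩ := h2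
  rw [(ore_bij h).1 h3]

theorem exists_lead {σ : T →+* T} {δ : T → T} (h : IsOreExtension ι σ δ x) {s : U} (hs : s ≠ 0) :
    ∃ n r, r ≠ 0 ∧ HasLead ι x s n r := by
  obtain ⟨q, rfl⟩ := (ore_bij h).2 s
  refine ⟨q.natDegree, q.leadingCoeff, ?_, q, rfl, le_rfl, rfl⟩
  intro hz
  rw [leadingCoeff_eq_zero] at hz
  apply hs
  simp [hz]

theorem xdeg_mul [IsDomain T] {σ : T →+* T} {δ : T → T} (h : IsOreExtension ι σ δ x)
    (hσ : Function.Injective σ) (s t : U) :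
    xdeg h (s * t) = xdeg h s + xdeg h t := by
  by_cases hs : s = 0
  · simp [hs, (xdeg_bot h 0).2 rfl]
  by_cases ht : t = 0
  · simp [ht, (xdeg_bot h 0).2 rfl]
  obtain ⟨m, r, hr, h1⟩ := exists_lead h hs
  obtain ⟨n, r', hr', h2⟩ := exists_lead h ht
  have h3 := h1.mul h.comm_rule h2
  rw [h1.xdeg_eq h hr, h2.xdeg_eq h hr', h3.xdeg_eq h, Nat.cast_add]
  refine mul_ne_zero hr ?_
  intro hz
  apply hr'
  apply hσ.iterate m
  rw [hz]
  simp [← RingHom.coe_pow]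

end lead

open Polynomial in
/-- **Richter, Proposition 3.2.** Let `𝕜` be a field, `R = 𝕜[y]`, `σ` the
endomorphism of `R` fixing `𝕜` with `σ(y) = p(y)` where `deg p > 1`, and `δ` a
`σ`-derivation vanishing on `𝕜`. If `a ∈ S = R[x; σ, δ]` with `a ∉ 𝕜`, then `C_S(a)` is
a free `𝕜[a]`-module of finite rank. -/
theorem richter_centralizer_finite_rank {K : Type*} [Field K] [Ring S]
    (σ : K[X] →+* K[X]) (p : K[X]) (hp : 1 < p.natDegree)
    (hσC : ∀ a : K, σ (C a) = C a) (hσX : σ X = p)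
    (δ : K[X] → K[X]) (hδC : ∀ a : K, δ (C a) = 0)
    (ι : K[X] →+* S) (x : S) (h : IsOreExtension ι σ δ x)
    (a : S) (ha : ∀ c : K, a ≠ ι (C c)) :
    IsFreeModuleOfFiniteRank (polysIn ι {r : K[X] | ∃ c : K, r = C c} a)
      (centralizerOf a) := by
  classical
  have hσ : ∀ r, σ r = r.comp p := by
    intro r
    have : σ = compRingHom p := by
      apply Polynomial.ringHom_ext
      · intro c; simp [hσC]
      · simp [hσX]
    rw [this]; rfl
  have hnd : ∀ m r, (σ^[m] r).natDegree = r.natDegree * p.natDegree ^ m := by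
    intro m r
    induction m with
    | zero => simp
    | succ m ih => rw [Function.iterate_succ_apply', hσ, natDegree_comp, ih, pow_succ, mul_assoc]
  have hσinj : Function.Injective σ := by
    rw [injective_iff_map_eq_zero]
    intro r hr
    rw [hσ, comp_eq_zero_iff] at hr
    rcases hr with hr | ⟨_, hr⟩
    · exact hr
    · rw [hr] at hp; simp at hp
  have hit0 : ∀ m r, r ≠ 0 → σ^[m] r ≠ 0 := fun m r hr hz => hr (hσinj.iterate m (by
    rw [hz]; simp [← RingHom.coe_pow]))
  have hitC : ∀ m (k : K) r, σ^[m] (C k * r) = C k * σ^[m] r := by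
    intro m k r
    induction m with
    | zero => simp
    | succ m ih => rw [Function.iterate_succ_apply', ih, map_mul, hσC,
        Function.iterate_succ_apply']
  have hitsub : ∀ m r r', σ^[m] (r - r') = σ^[m] r - σ^[m] r' := by
    intro m r r'
    rw [← RingHom.coe_pow, map_sub]
  have hιinj : Function.Injective ι := by
    intro r r' hr
    have := HasLead.const (ι := ι) (x := x) r
    rw [hr] at this
    exact this.uniq h (HasLead.const _)
  have ha0 : a ≠ 0 := fun hz => ha 0 (by simp [hz])
  obtain ⟨n, α, hα, hLa⟩ := exists_lead h ha0
  rcases Nat.eq_zero_or_pos n with rfl | hn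
  · have haα := hLa.zero
    have hαd : 0 < α.natDegree := by
      rw [Nat.pos_iff_ne_zero]
      intro hz
      exact ha (α.coeff 0) (by rw [haα]; congr 1; exact eq_C_of_natDegree_eq_zero hz)
    refine abs_transfer ι ι hιinj (fun k => rfl) a α haα.symm ?_ ?_
    · intro b
      constructor
      · intro hb
        by_cases hb0 : b = 0
        · exact ⟨0, by simp [hb0]⟩
        obtain ⟨m, β, hβ, hLb⟩ := exists_lead h hb0
        have h1 := hLb.mul h.comm_rule hLa
        have h2 := hLa.mul h.comm_rule hLb
        rw [show b * a = a * b from hb] at h1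
        rw [zero_add] at h2
        have h3 := h1.uniq h h2
        rw [Function.iterate_zero, id, mul_comm α] at h3
        have h4 := congrArg natDegree (mul_left_cancel₀ hβ h3)
        rw [hnd] at h4
        have hm : m = 0 := by
          by_contra hm
          have := Nat.one_lt_pow hm hp
          nlinarith
        subst hm
        exact ⟨β, hLb.zero.symm⟩
      · rintro ⟨b, rfl⟩
        show _ * _ = _ * _
        rw [haα, ← map_mul, ← map_mul, mul_comm]
    · refine abs_main Polynomial.degree (fun b => degree_eq_bot) degree_add_le (fun b c => degree_mul)
        (fun k b hk => ?_) ?_ α α.natDegree hαd (degree_eq_natDegree hα)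
      · rw [smul_eq_C_mul, degree_C_mul hk]
      · intro b c hb hc hbc
        have hlc := leadingCoeff_ne_zero.2 hc
        refine ⟨b.leadingCoeff / c.leadingCoeff, degree_sub_lt_left ?_ hb ?_⟩
        · rw [smul_eq_C_mul, degree_C_mul (div_ne_zero (leadingCoeff_ne_zero.2 hb) hlc), hbc]
        · rw [smul_eq_C_mul, leadingCoeff_mul, leadingCoeff_C, div_mul_cancel₀ _ hlc]
  · have hcent : ∀ (k : K) (s : S), ι (C k) * s = s * ι (C k) := by
      intro k s
      obtain ⟨q, rfl⟩ := (ore_bij h).2 s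
      simp only []
      have hxp : ∀ j : ℕ, Commute (ι (C k)) (x ^ j) := by
        intro j
        apply Commute.pow_right
        show _ * _ = _ * _
        rw [h.comm_rule, hσC, hδC]; simp
      rw [eval₂_eq_sum, Polynomial.sum]
      refine Commute.sum_right _ _ _ fun j _ => Commute.mul_right ?_ (hxp j)
      show _ * _ = _ * _
      rw [← map_mul, ← map_mul, mul_comm]
    let _ : Algebra K S := (ι.comp C).toAlgebra' (fun k s => hcent k s)
    have halg : ∀ k : K, algebraMap K S k = ι (C k) := fun k => rfl
    let A := Subalgebra.centralizer K ({a} : Set S)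
    have hA : ∀ b : S, b ∈ A ↔ b * a = a * b := by
      intro b
      rw [Subalgebra.mem_centralizer_iff]
      simp [eq_comm]
    refine abs_transfer (A := A) ι A.subtype Subtype.val_injective (fun k => rfl) a
      ⟨a, (hA a).2 rfl⟩ rfl ?_ ?_
    · intro b
      constructor
      · intro hb; exact ⟨⟨b, (hA b).2 hb⟩, rfl⟩
      · rintro ⟨b, rfl⟩; exact (hA _).1 b.2
    · have hlead : ∀ b : S, b ∈ A → ∀ m β, HasLead ι x b m β →
          β * σ^[m] α = α * σ^[n] β := by
        intro b hb m β hL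
        have h1 := hL.mul h.comm_rule hLa
        have h2 := hLa.mul h.comm_rule hL
        rw [(hA b).1 hb, add_comm m n] at h1
        exact h1.uniq h h2
      have hdeg : ∀ m β γ, β ≠ 0 → γ ≠ 0 → β * σ^[m] α = α * σ^[n] β →
          γ * σ^[m] α = α * σ^[n] γ → β.natDegree = γ.natDegree := by
        intro m β γ hβ hγ h1 h2
        have e1 := congrArg natDegree h1
        have e2 := congrArg natDegree h2
        rw [natDegree_mul hβ (hit0 _ _ hα), natDegree_mul hα (hit0 _ _ hβ), hnd, hnd] at e1
        rw [natDegree_mul hγ (hit0 _ _ hα), natDegree_mul hα (hit0 _ _ hγ), hnd, hnd] at e2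
        have := Nat.one_lt_pow hn.ne' hp
        generalize p.natDegree ^ n = P at *
        generalize α.natDegree * p.natDegree ^ m = Q at *
        generalize β.natDegree = B at *
        generalize γ.natDegree = G at *
        rcases lt_trichotomy B G with hlt | heq | hlt
        · nlinarith
        · exact heq
        · nlinarith
      refine abs_main (A := A) (fun b => xdeg h (b : S)) (fun b => ?_) (fun b c => ?_)
        (fun b c => ?_) (fun k b hk => ?_) ?_ ⟨a, (hA a).2 rfl⟩ n hn (hLa.xdeg_eq h hα)
      · rw [xdeg_bot]; simp
      · exact xdeg_add h _ _
      · exact xdeg_mul h hσinj _ _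
      · have : ((k • b : A) : S) = ι (C k) * (b : S) := Algebra.smul_def k (b : S)
        simp only [this]
        rw [xdeg_mul h hσinj, (HasLead.const (ι := ι) (x := x) (C k)).xdeg_eq h (by simpa using hk)]
        simp
      · rintro ⟨b, hb⟩ ⟨c, hc⟩ hb0 hc0 hbc
        have hb0' : b ≠ 0 := fun hz => hb0 (Subtype.ext hz)
        have hc0' : c ≠ 0 := fun hz => hc0 (Subtype.ext hz)
        simp only [] at hbc
        obtain ⟨m, β, hβ, hLb⟩ := exists_lead h hb0'
        obtain ⟨m', γ, hγ, hLc⟩ := exists_lead h hc0'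
        rw [hLb.xdeg_eq h hβ, hLc.xdeg_eq h hγ] at hbc
        norm_cast at hbc
        subst hbc
        have e1 := hlead b hb _ _ hLb
        have e2 := hlead c hc _ _ hLc
        have hd := hdeg m β γ hβ hγ e1 e2
        have hlc := leadingCoeff_ne_zero.2 hγ
        have hlb := leadingCoeff_ne_zero.2 hβ
        set k := β.leadingCoeff / γ.leadingCoeff with hk
        have hk0 : k ≠ 0 := div_ne_zero hlb hlc
        refine ⟨k, ?_⟩
        have hz : β - C k * γ = 0 := by
          by_contra hne
          have e3 : (β - C k * γ) * σ^[m] α = α * σ^[n] (β - C k * γ) := by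
            rw [hitsub, hitC, sub_mul, mul_sub, e1, mul_assoc, e2]; ring
          have e4 := hdeg m _ _ hne hβ e3 e1
          have e5 : (β - C k * γ).degree < β.degree := by
            refine degree_sub_lt_left ?_ hβ ?_
            · rw [degree_C_mul hk0, degree_eq_natDegree hβ, degree_eq_natDegree hγ, hd]
            · rw [leadingCoeff_mul, leadingCoeff_C, div_mul_cancel₀ _ hlc]
          rw [degree_eq_natDegree hβ, degree_eq_natDegree hne, e4] at e5
          exact lt_irrefl _ e5
        have hL := hLb.add (hLc.smul (-C k))
        rw [neg_mul, ← sub_eq_add_neg, hz] at hL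
        have h6 := hL.xdeg_lt h
        show xdeg h (b - k • c) < xdeg h b
        rw [hLb.xdeg_eq h hβ]
        convert h6 using 2
        rw [Algebra.smul_def, halg, map_neg, neg_mul, sub_eq_add_neg]
end
end

section
/- Let 𝕜 be a field, σ an endomorphism of 𝕜[y] such that σ(y) = p(y) with deg(p) > 1 and σ(r) = r for all r ∈ 𝕜, and let δ be a σ-derivation with δ(r) = 0 for all r ∈ 𝕜. If a and b are two commuting elements of 𝕜[y][x;σ,δ], then there is a nonzero polynomial f(s,t) ∈ 𝕜[s,t] such that f(a,b) = 0. -/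
open Finsupp

noncomputable section

variable {R S : Type*}

open Polynomial in
theorem aux_dim {K : Type*} [Field K] [Ring S] [Algebra K S] (F : ℕ → Submodule K S)
    (h0 : F 0 ≤ ⊥)
    (hs : ∀ n u v, u ∈ F (n+1) → u ∉ F n → v ∈ F (n+1) → ∃ k : K, v - k • u ∈ F n) (n : ℕ) :
    ∃ s : Finset S, s.card ≤ n ∧ F n ≤ Submodule.span K (s : Set S) := by
  classical
  induction n with
  | zero => exact ⟨∅, by simp, by simpa using h0⟩
  | succ n ih =>
    obtain ⟨s, hc, hsp⟩ := ih
    by_cases hle : F (n+1) ≤ F n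
    · exact ⟨s, by omega, hle.trans hsp⟩
    · obtain ⟨u, hu, hu'⟩ := Set.not_subset.1 hle
      refine ⟨insert u s, (Finset.card_insert_le _ _).trans (by omega), fun v hv => ?_⟩
      obtain ⟨k, hk⟩ := hs n u v hu hu' hv
      have h1 : v - k • u ∈ Submodule.span K ((insert u s : Finset S) : Set S) :=
        Submodule.span_mono (by simp) (hsp hk)
      have h2 : k • u ∈ Submodule.span K ((insert u s : Finset S) : Set S) :=
        Submodule.smul_mem _ _ (Submodule.subset_span (by simp))
      simpa using add_mem h1 h2

theorem aux_dep {K : Type*} [Field K] [Ring S] [Algebra K S] (F : ℕ → Submodule K S)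
    (h0 : F 0 ≤ ⊥) (hmono : Monotone F)
    (hs : ∀ n u v, u ∈ F (n+1) → u ∉ F n → v ∈ F (n+1) → ∃ k : K, v - k • u ∈ F n)
    (a b : S) (n m : ℕ) (hF : ∀ i j, a ^ i * b ^ j ∈ F (i * n + j * m + 1)) :
    ∃ c : ℕ × ℕ →₀ K, c ≠ 0 ∧ (c.sum fun q k => k • (a ^ q.1 * b ^ q.2)) = 0 := by
  by_contra hcon
  push Not at hcon
  have hli : LinearIndependent K (fun q : ℕ × ℕ => a ^ q.1 * b ^ q.2) := by
    rw [linearIndependent_iff]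
    intro c hc
    by_contra hne
    exact hcon c hne hc
  set M := n + m + 1 with hM
  obtain ⟨s, hc, hsp⟩ := aux_dim F h0 hs (M * (n + m) + 1)
  have hinj : Function.Injective
      (fun q : Fin (M+1) × Fin (M+1) => ((q.1 : ℕ), (q.2 : ℕ))) := by
    intro x y hxy
    simp only [Prod.mk.injEq] at hxy
    exact Prod.ext (Fin.ext hxy.1) (Fin.ext hxy.2)
  have h2 := hli.comp _ hinj
  have h3 := linearIndependent_le_span' _ h2 (s : Set S) (by
    rintro _ ⟨q, rfl⟩
    apply hsp
    refine hmono ?_ (hF q.1 q.2)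
    have h1 : (q.1 : ℕ) ≤ M := by omega
    have h2 : (q.2 : ℕ) ≤ M := by omega
    have := Nat.mul_le_mul_right n h1
    have := Nat.mul_le_mul_right m h2
    nlinarith)
  have h4 : (M+1) * (M+1) ≤ s.card := by
    have h5 : (((M+1) * (M+1) : ℕ) : Cardinal) ≤ (s.card : ℕ) := by simpa using h3
    exact_mod_cast h5
  nlinarith

/-- elements of degree `< n`. -/
def oreD {R : Type*} [Ring R] [Ring S] (ι : R →+* S) (x : S) (n : ℕ) : AddSubgroup S :=
  AddSubgroup.closure {s | ∃ r : R, ∃ i < n, s = ι r * x ^ i}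

section D
variable {R : Type*} [Ring R] [Ring S] {ι : R →+* S} {σ : R →+* R} {δ : R → R} {x : S}

theorem oreD_mono {n m : ℕ} (hnm : n ≤ m) : oreD ι x n ≤ oreD ι x m := by
  apply AddSubgroup.closure_mono
  rintro _ ⟨r, i, hi, rfl⟩
  exact ⟨r, i, by omega, rfl⟩

theorem oreD_mem {n i : ℕ} (r : R) (hi : i < n) : ι r * x ^ i ∈ oreD ι x n :=
  AddSubgroup.subset_closure ⟨r, i, hi, rfl⟩

theorem oreD_ind {n : ℕ} {P : S → Prop} (h0 : P 0) (ha : ∀ u v, P u → P v → P (u + v))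
    (hm : ∀ r : R, ∀ i < n, P (ι r * x ^ i)) {s : S} (hs : s ∈ oreD ι x n) : P s := by
  induction hs using AddSubgroup.closure_induction'' with
  | zero => exact h0
  | mem y hy => obtain ⟨r, i, hi, rfl⟩ := hy; exact hm r i hi
  | neg_mem y hy =>
    obtain ⟨r, i, hi, rfl⟩ := hy
    rw [← neg_mul, ← map_neg]
    exact hm _ i hi
  | add u v _ _ hu hv => exact ha u v hu hv

theorem oreD_zero {s : S} (hs : s ∈ oreD ι x 0) : s = 0 :=
  oreD_ind (P := fun t : S => t = (0 : S)) (Eq.refl (0 : S))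
    (fun u v hu hv => by rw [hu, hv, add_zero]) (fun _ i hi => absurd hi (Nat.not_lt_zero i)) hs

theorem oreD_lmul {n : ℕ} (r : R) {s : S} (hs : s ∈ oreD ι x n) : ι r * s ∈ oreD ι x n := by
  refine oreD_ind (P := fun s => ι r * s ∈ oreD ι x n) (by simp) ?_ ?_ hs
  · intro u v hu hv; rw [mul_add]; exact add_mem hu hv
  · intro t i hi
    rw [← mul_assoc, ← map_mul]; exact oreD_mem _ hi

theorem oreD_mul_pow {n : ℕ} (m : ℕ) {s : S} (hs : s ∈ oreD ι x n) :
    s * x ^ m ∈ oreD ι x (n + m) := by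
  refine oreD_ind (P := fun s => s * x ^ m ∈ oreD ι x (n + m)) (by simp) ?_ ?_ hs
  · intro u v hu hv; rw [add_mul]; exact add_mem hu hv
  · intro t i hi
    rw [mul_assoc, ← pow_add]; exact oreD_mem _ (by omega)

theorem oreD_x_mul (h : IsOreExtension ι σ δ x) {n : ℕ} {s : S} (hs : s ∈ oreD ι x n) :
    x * s ∈ oreD ι x (n + 1) := by
  refine oreD_ind (P := fun s => x * s ∈ oreD ι x (n + 1)) (by simp) ?_ ?_ hs
  · intro u v hu hv; rw [mul_add]; exact add_mem hu hv
  · intro t i hi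
    rw [← mul_assoc, h.comm_rule, add_mul, mul_assoc, ← pow_succ']
    exact add_mem (oreD_mem _ (by omega)) (oreD_mem _ (by omega))

theorem oreD_pow_mul (h : IsOreExtension ι σ δ x) {n : ℕ} (m : ℕ) {s : S}
    (hs : s ∈ oreD ι x n) : x ^ m * s ∈ oreD ι x (m + n) := by
  induction m with
  | zero => simpa using hs
  | succ m ih =>
    rw [pow_succ', mul_assoc]
    have := oreD_x_mul h ih
    rwa [show m + 1 + n = m + n + 1 by omega]

theorem ore_pow_comm (h : IsOreExtension ι σ δ x) (n : ℕ) (t : R) :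
    x ^ n * ι t - ι (σ^[n] t) * x ^ n ∈ oreD ι x n := by
  induction n with
  | zero => simp
  | succ n ih =>
    have h1 := oreD_x_mul h ih
    have : x ^ (n+1) * ι t - ι (σ^[n+1] t) * x ^ (n+1) =
        x * (x ^ n * ι t - ι (σ^[n] t) * x ^ n) + ι (δ (σ^[n] t)) * x ^ n := by
      rw [mul_sub, ← mul_assoc x (ι _), h.comm_rule, Function.iterate_succ_apply', pow_succ']
      noncomm_ring
    rw [this]
    exact add_mem h1 (oreD_mem _ (by omega))

theorem oreD_mul (h : IsOreExtension ι σ δ x) {n m : ℕ} {s t : S}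
    (hs : s ∈ oreD ι x n) (ht : t ∈ oreD ι x (m + 1)) : s * t ∈ oreD ι x (n + m) := by
  refine oreD_ind (P := fun s => s * t ∈ oreD ι x (n + m)) (by simp) ?_ ?_ hs
  · intro u v hu hv; rw [add_mul]; exact add_mem hu hv
  · intro r i hi
    rw [mul_assoc]
    exact oreD_lmul _ (oreD_mono (by omega) (oreD_pow_mul h i ht))

theorem oreD_split {n : ℕ} {s : S} (hs : s ∈ oreD ι x (n + 1)) :
    ∃ r : R, s - ι r * x ^ n ∈ oreD ι x n := by
  refine oreD_ind (P := fun s => ∃ r : R, s - ι r * x ^ n ∈ oreD ι x n) ⟨0, by simp⟩ ?_ ?_ hs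
  · rintro u v ⟨r, hr⟩ ⟨t, ht⟩
    refine ⟨r + t, ?_⟩
    have := add_mem hr ht
    convert this using 1
    rw [map_add]; noncomm_ring
  · intro r i hi
    rcases Nat.lt_succ_iff_lt_or_eq.1 hi with hi | rfl
    · exact ⟨0, by simpa using oreD_mem r hi⟩
    · exact ⟨r, by simp⟩

theorem oreD_lead (h : IsOreExtension ι σ δ x) {n m : ℕ} {s t : S} {r q : R}
    (hs : s - ι r * x ^ n ∈ oreD ι x n) (ht : t - ι q * x ^ m ∈ oreD ι x m) :
    s * t - ι (r * σ^[n] q) * x ^ (n + m) ∈ oreD ι x (n + m) := by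
  have ht' : t ∈ oreD ι x (m + 1) := by
    have := add_mem (oreD_mono (Nat.le_succ m) ht) (oreD_mem (ι := ι) (x := x) q (Nat.lt_succ_self m))
    simpa using this
  have h1 := oreD_mul h hs ht'
  have h2 := oreD_lmul r (oreD_pow_mul h n ht)
  have h3 := oreD_lmul r (oreD_mul_pow m (ore_pow_comm h n q))
  have := add_mem h1 (add_mem h2 h3)
  convert this using 1
  rw [map_mul, pow_add]; noncomm_ring

theorem oreD_uniq (h : IsOreExtension ι σ δ x) {n : ℕ} {r : R}
    (hr : ι r * x ^ n ∈ oreD ι x n) : r = 0 := by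
  classical
  have key : ∀ s ∈ oreD ι x n, ∃ c : ℕ →₀ R, c n = 0 ∧ s = c.sum fun i r => ι r * x ^ i := by
    intro s hs
    refine oreD_ind (P := fun s => ∃ c : ℕ →₀ R, c n = 0 ∧ s = c.sum fun i r => ι r * x ^ i)
      ⟨0, by simp⟩ ?_ ?_ hs
    · rintro u v ⟨c, hc, rfl⟩ ⟨d, hd, rfl⟩
      refine ⟨c + d, by simp [hc, hd], ?_⟩
      rw [Finsupp.sum_add_index']
      · simp
      · intros; rw [map_add, add_mul]
    · intro r i hi
      refine ⟨Finsupp.single i r, by simp [Finsupp.single_apply, hi.ne], ?_⟩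
      rw [Finsupp.sum_single_index]; simp
  obtain ⟨c, hc, hs⟩ := key _ hr
  have := (h.repr_uniq _).unique hs (y₂ := Finsupp.single n r) (by
    rw [Finsupp.sum_single_index]; simp)
  rw [this] at hc
  simpa using hc

theorem oreD_exists (h : IsOreExtension ι σ δ x) (s : S) : ∃ n, s ∈ oreD ι x n := by
  obtain ⟨c, hc, -⟩ := h.repr_uniq s
  refine ⟨c.support.sup id + 1, ?_⟩
  rw [hc]
  refine AddSubgroup.sum_mem _ fun i hi => oreD_mem _ ?_
  exact Nat.lt_succ_of_le (Finset.le_sup (f := id) hi)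

theorem oreD_uniq' (h : IsOreExtension ι σ δ x) {n : ℕ} {r q : R} {s : S}
    (hr : s - ι r * x ^ n ∈ oreD ι x n) (hq : s - ι q * x ^ n ∈ oreD ι x n) : r = q := by
  have h1 := sub_mem hq hr
  have : ι (r - q) * x ^ n ∈ oreD ι x n := by
    convert h1 using 1
    rw [map_sub]; noncomm_ring
  exact sub_eq_zero.1 (oreD_uniq h this)

theorem oreD_pos (h : IsOreExtension ι σ δ x) (s : S) :
    s ∈ oreD ι x 1 ∨ ∃ n, 0 < n ∧ ∃ r : R, r ≠ 0 ∧ s - ι r * x ^ n ∈ oreD ι x n := by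
  obtain ⟨N, hN⟩ := oreD_exists h s
  induction N with
  | zero => exact Or.inl (oreD_mono (by omega) hN)
  | succ N ih =>
    obtain ⟨r, hr⟩ := oreD_split hN
    by_cases h0 : r = 0
    · apply ih; simpa [h0] using hr
    · rcases Nat.eq_zero_or_pos N with rfl | hpos
      · exact Or.inl hN
      · exact Or.inr ⟨N, hpos, r, h0, hr⟩

theorem oreD_powmul (h : IsOreExtension ι σ δ x) {n m : ℕ} {a b : S}
    (ha : a ∈ oreD ι x (n + 1)) (hb : b ∈ oreD ι x (m + 1)) (i j : ℕ) :
    a ^ i * b ^ j ∈ oreD ι x (i * n + j * m + 1) := by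
  have one : (1 : S) ∈ oreD ι x 1 := by
    simpa using oreD_mem (ι := ι) (x := x) 1 (Nat.zero_lt_one)
  have P : ∀ {a : S} {n : ℕ}, a ∈ oreD ι x (n + 1) → ∀ i : ℕ, a ^ i ∈ oreD ι x (i * n + 1) := by
    intro a n ha i
    induction i with
    | zero => simpa using one
    | succ i ih =>
      rw [pow_succ]
      have := oreD_mul h ih ha
      rwa [show (i + 1) * n + 1 = i * n + 1 + n by ring]
  have := oreD_mul h (P ha i) (P hb j)
  rwa [show i * n + j * m + 1 = i * n + 1 + j * m by ring]

end D

open Polynomial in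
theorem sigma_deg {K : Type*} [Field K] (σ : K[X] →+* K[X]) (p : K[X])
    (hσC : ∀ a : K, σ (C a) = C a) (hσX : σ X = p) (n : ℕ) (r : K[X]) :
    (σ^[n] r).natDegree = r.natDegree * p.natDegree ^ n := by
  have hs : ∀ r, σ r = r.comp p := by
    intro r
    have : σ = Polynomial.compRingHom p := by
      apply Polynomial.ringHom_ext
      · intro a; simp [hσC]
      · simp [hσX]
    rw [this]; simp
  induction n with
  | zero => simp
  | succ n ih =>
    rw [Function.iterate_succ_apply', hs, natDegree_comp, ih, pow_succ, mul_assoc]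

open Polynomial in
theorem eq_deg {K : Type*} [Field K] (σ : K[X] →+* K[X]) (p : K[X]) (hp : 1 < p.natDegree)
    (hσC : ∀ a : K, σ (C a) = C a) (hσX : σ X = p) (n N : ℕ) (hn : 0 < n) (r u w : K[X])
    (hr : r ≠ 0) (hu : u ≠ 0) (hw : w ≠ 0) (h1 : u * σ^[N] r = r * σ^[n] u)
    (h2 : w * σ^[N] r = r * σ^[n] w) : w.natDegree = u.natDegree := by
  have inj : Function.Injective σ := by
    rw [injective_iff_map_eq_zero]
    intro f hf
    have hd := sigma_deg σ p hσC hσX 1 f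
    simp only [Function.iterate_one, hf, natDegree_zero, pow_one] at hd
    have : f.natDegree = 0 := by
      rcases Nat.mul_eq_zero.1 hd.symm with h | h <;> omega
    rw [eq_C_of_natDegree_eq_zero this, hσC] at hf
    rw [eq_C_of_natDegree_eq_zero this, hf]
  have nz : ∀ n (f : K[X]), f ≠ 0 → σ^[n] f ≠ 0 := by
    intro n f hf h0
    apply hf
    apply (inj.iterate n)
    rw [h0, iterate_map_zero]
  have e1 := congrArg natDegree h1
  have e2 := congrArg natDegree h2
  rw [natDegree_mul hu (nz _ _ hr), natDegree_mul hr (nz _ _ hu), sigma_deg σ p hσC hσX,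
    sigma_deg σ p hσC hσX] at e1
  rw [natDegree_mul hw (nz _ _ hr), natDegree_mul hr (nz _ _ hw), sigma_deg σ p hσC hσX,
    sigma_deg σ p hσC hσX] at e2
  have hd : 1 < p.natDegree ^ n := Nat.one_lt_pow hn.ne' hp
  generalize p.natDegree ^ n = D at *
  generalize r.natDegree * p.natDegree ^ N = E at *
  obtain ⟨D, rfl⟩ : ∃ D', D = D' + 2 := ⟨D - 2, by omega⟩
  have e3 : r.natDegree + w.natDegree * (D+1) = E := by linarith
  have e4 : r.natDegree + u.natDegree * (D+1) = E := by linarith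
  exact Nat.eq_of_mul_eq_mul_right (Nat.succ_pos D) (by simp only [Nat.succ_eq_add_one]; linarith)

open Polynomial in
/-- filtration of the centralizer -/
def cenF {K : Type*} [Field K] [Ring S] [Algebra K S] (ι : K[X] →+* S) (x : S)
    (hι : ∀ k, algebraMap K S k = ι (C k)) (e : S) (n : ℕ) : Submodule K S where
  carrier := {s | s ∈ oreD ι x n ∧ s * e = e * s}
  add_mem' := by
    rintro u v ⟨hu, hu'⟩ ⟨hv, hv'⟩
    exact ⟨add_mem hu hv, by rw [add_mul, mul_add, hu', hv']⟩
  zero_mem' := ⟨zero_mem _, by simp⟩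
  smul_mem' := by
    rintro k u ⟨hu, hu'⟩
    refine ⟨?_, by simp [hu']⟩
    rw [Algebra.smul_def, hι]
    exact oreD_lmul _ hu

open Polynomial in
/-- filtration of the base ring -/
def polF {K : Type*} [Field K] [Ring S] [Algebra K S] (ι : K[X] →+* S)
    (hι : ∀ k, algebraMap K S k = ι (C k)) (n : ℕ) : Submodule K S where
  carrier := {s | ∃ f : K[X], f.degree < n ∧ s = ι f}
  add_mem' := by
    rintro _ _ ⟨f, hf, rfl⟩ ⟨g, hg, rfl⟩
    exact ⟨f + g, (degree_add_le _ _).trans_lt (max_lt hf hg), by simp⟩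
  zero_mem' := ⟨0, by simp [WithBot.bot_lt_coe], by simp⟩
  smul_mem' := by
    rintro k _ ⟨f, hf, rfl⟩
    refine ⟨C k * f, ?_, by rw [Algebra.smul_def, hι, map_mul]⟩
    rw [← smul_eq_C_mul]
    exact (degree_smul_le _ _).trans_lt hf

open Polynomial in
theorem case_pos {K : Type*} [Field K] [Ring S] [Algebra K S]
    (σ : K[X] →+* K[X]) (p : K[X]) (hp : 1 < p.natDegree)
    (hσC : ∀ a : K, σ (C a) = C a) (hσX : σ X = p)
    (δ : K[X] → K[X])
    (ι : K[X] →+* S) (hι : ∀ k, algebraMap K S k = ι (C k))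
    (x : S) (h : IsOreExtension ι σ δ x)
    (a b e : S) (hae : a * e = e * a) (hbe : b * e = e * b)
    (n : ℕ) (hn : 0 < n) (r : K[X]) (hr : r ≠ 0) (he : e - ι r * x ^ n ∈ oreD ι x n) :
    ∃ c : ℕ × ℕ →₀ K, c ≠ 0 ∧ (c.sum fun q k => k • (a ^ q.1 * b ^ q.2)) = 0 := by
  obtain ⟨da, hda⟩ := oreD_exists h a
  obtain ⟨db, hdb⟩ := oreD_exists h b
  have comm : ∀ {s : S} {N : ℕ} {u : K[X]}, s * e = e * s → s - ι u * x ^ N ∈ oreD ι x N →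
      u * σ^[N] r = r * σ^[n] u := by
    intro s N u hs hu
    have h1 := oreD_lead h hu he
    have h2 := oreD_lead h he hu
    rw [hs, add_comm N n] at h1
    exact oreD_uniq' h h1 h2
  refine aux_dep (cenF ι x hι e) ?_ ?_ ?_ a b da db ?_
  · rintro s ⟨hs, -⟩
    simpa using oreD_zero hs
  · rintro i j hij s ⟨hs, hs'⟩
    exact ⟨oreD_mono hij hs, hs'⟩
  · rintro N s t hsm hs1 htm
    obtain ⟨hs, hs'⟩ := hsm
    obtain ⟨ht, ht'⟩ := htm
    obtain ⟨u, hu⟩ := oreD_split hs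
    obtain ⟨v, hv⟩ := oreD_split ht
    have hu0 : u ≠ 0 := by
      rintro rfl
      exact hs1 ⟨by simpa using hu, hs'⟩
    have key : ∀ k : K, t - k • s - ι (v - C k * u) * x ^ N ∈ oreD ι x N := by
      intro k
      have := sub_mem hv (oreD_lmul (C k) hu)
      convert this using 1
      rw [Algebra.smul_def, hι, map_sub, map_mul]; noncomm_ring
    have kc : ∀ k : K, (t - k • s) * e = e * (t - k • s) := by
      intro k
      simp [sub_mul, mul_sub, hs', ht']
    have deg : ∀ k : K, v - C k * u ≠ 0 → (v - C k * u).natDegree = u.natDegree := fun k hk =>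
      eq_deg σ p hp hσC hσX n N hn r u _ hr hu0 hk (comm hs' hu) (comm (kc k) (key k))
    let k : K := v.coeff u.natDegree / u.leadingCoeff
    refine ⟨k, ?_, kc k⟩
    have hz : v - C k * u = 0 := by
      by_contra hne
      have hd := deg k hne
      have : (v - C k * u).leadingCoeff = 0 := by
        rw [leadingCoeff, hd, coeff_sub, coeff_C_mul]
        have : u.coeff u.natDegree ≠ 0 := by simpa using hu0
        simp only [k, leadingCoeff]
        field_simp
        simp
      exact hne (leadingCoeff_eq_zero.1 this)
    have := key k
    rw [hz] at this
    simpa using this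
  · intro i j
    refine ⟨oreD_powmul h (oreD_mono (by omega) hda) (oreD_mono (by omega) hdb) i j, ?_⟩
    have h1 : Commute a e := hae
    have h2 : Commute b e := hbe
    exact ((h1.pow_left i).mul_left (h2.pow_left j)).eq

open Polynomial in
theorem case_zero {K : Type*} [Field K] [Ring S] [Algebra K S]
    (ι : K[X] →+* S) (hι : ∀ k, algebraMap K S k = ι (C k)) (f g : K[X]) :
    ∃ c : ℕ × ℕ →₀ K, c ≠ 0 ∧ (c.sum fun q k => k • ((ι f) ^ q.1 * (ι g) ^ q.2)) = 0 := by
  have lt_succ : ∀ (n : ℕ) (u : K[X]), u.degree < ((n+1 : ℕ) : WithBot ℕ) → u.coeff n = 0 →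
      u.degree < (n : WithBot ℕ) := by
    intro n u hu h0
    rw [degree_lt_iff_coeff_zero] at hu ⊢
    intro m hm
    rcases hm.eq_or_lt with rfl | hm
    · exact h0
    · exact hu m hm
  refine aux_dep (polF ι hι) ?_ ?_ ?_ _ _ f.natDegree g.natDegree ?_
  · rintro _ ⟨u, hu, rfl⟩
    have : u = 0 := by
      rw [← degree_eq_bot]
      simpa using hu
    simp [this]
  · rintro i j hij _ ⟨u, hu, rfl⟩
    exact ⟨u, hu.trans_le (by exact_mod_cast hij), rfl⟩
  · rintro n s t ⟨u, hu, rfl⟩ hn ⟨v, hv, rfl⟩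
    have hc : u.coeff n ≠ 0 := by
      intro h0
      exact hn ⟨u, lt_succ n u hu h0, rfl⟩
    refine ⟨v.coeff n / u.coeff n, v - C (v.coeff n / u.coeff n) * u, lt_succ n _ ?_ ?_, ?_⟩
    · refine (degree_sub_le _ _).trans_lt (max_lt hv ?_)
      rw [← smul_eq_C_mul]
      exact (degree_smul_le _ _).trans_lt hu
    · rw [coeff_sub, coeff_C_mul, div_mul_cancel₀ _ hc, sub_self]
    · rw [Algebra.smul_def, hι, map_sub, map_mul]
  · intro i j
    refine ⟨f ^ i * g ^ j, ?_, by simp⟩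
    refine degree_le_natDegree.trans_lt ?_
    have h1 : (f ^ i * g ^ j).natDegree ≤ i * f.natDegree + j * g.natDegree :=
      natDegree_mul_le.trans (add_le_add natDegree_pow_le natDegree_pow_le)
    exact_mod_cast Nat.lt_succ_of_le h1

open Polynomial in
/-- **Richter, Theorem 3.4.** Let `𝕜` be a field, `σ` an endomorphism of
`𝕜[y]` fixing `𝕜` with `σ(y) = p(y)` where `deg p > 1`, and `δ` a `σ`-derivation
vanishing on `𝕜`. If `a` and `b` are commuting elements of `𝕜[y][x; σ, δ]`, then there
is a nonzero polynomial `f(s,t) ∈ 𝕜[s,t]` with `f(a,b) = 0`. -/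
theorem richter_annihilating_polynomial {K : Type*} [Field K] [Ring S]
    (σ : K[X] →+* K[X]) (p : K[X]) (hp : 1 < p.natDegree)
    (hσC : ∀ a : K, σ (C a) = C a) (hσX : σ X = p)
    (δ : K[X] → K[X]) (hδC : ∀ a : K, δ (C a) = 0)
    (ι : K[X] →+* S) (x : S) (h : IsOreExtension ι σ δ x)
    (a b : S) (hab : a * b = b * a) :
    ∃ c : ℕ × ℕ →₀ K, c ≠ 0 ∧
      (c.sum fun q k => ι (C k) * a ^ q.1 * b ^ q.2) = 0 := by
  have hcomm : ∀ (k : K) (s : S), ι (C k) * s = s * ι (C k) := by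
    intro k s
    have hx : Commute (ι (C k)) x := by
      have := h.comm_rule (C k)
      rw [hσC, hδC, map_zero, add_zero] at this
      exact this.symm
    obtain ⟨N, hN⟩ := oreD_exists h s
    refine oreD_ind (P := fun s => ι (C k) * s = s * ι (C k)) (by simp) ?_ ?_ hN
    · intro u v hu hv; rw [mul_add, add_mul, hu, hv]
    · intro r i _
      rw [mul_assoc, ← (hx.pow_right i).eq, ← mul_assoc, ← mul_assoc, ← map_mul, ← map_mul,
        mul_comm]
  letI : Algebra K S := RingHom.toAlgebra' (ι.comp C) (fun k s => hcomm k s)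
  have hι : ∀ k, algebraMap K S k = ι (C k) := fun k => rfl
  have main : ∃ c : ℕ × ℕ →₀ K, c ≠ 0 ∧ (c.sum fun q k => k • (a ^ q.1 * b ^ q.2)) = 0 := by
    rcases oreD_pos h a with ha | ⟨n, hn, r, hr, he⟩
    · rcases oreD_pos h b with hb | ⟨n, hn, r, hr, he⟩
      · have mem1 : ∀ s ∈ oreD ι x 1, ∃ f, s = ι f := by
          intro s hs
          obtain ⟨f, hf⟩ := oreD_split (n := 0) hs
          exact ⟨f, by simpa [sub_eq_zero] using oreD_zero hf⟩
        obtain ⟨f, rfl⟩ := mem1 a ha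
        obtain ⟨g, rfl⟩ := mem1 b hb
        exact case_zero ι hι f g
      · exact case_pos σ p hp hσC hσX δ ι hι x h a b b hab rfl n hn r hr he
    · exact case_pos σ p hp hσC hσX δ ι hι x h a b a rfl hab.symm n hn r hr he
  obtain ⟨c, hc, hs⟩ := main
  refine ⟨c, hc, ?_⟩
  rw [← hs]
  refine Finsupp.sum_congr fun q _ => ?_
  rw [Algebra.smul_def, hι, mul_assoc]
end
end

section
/- Let 𝕜 be a field, R = 𝕜[y], σ the endomorphism of R with σ(y) = qy and σ fixing 𝕜, and δ the σ-derivation with δ(y) = 1 and δ vanishing on 𝕜, where q ∈ 𝕜 is a root of unity. Let S = R[x;σ,δ] and let C be the center of S. If a and b are commuting elements of S, then there is a nonzero polynomial f(s,t) ∈ C[s,t] such that f(a,b) = 0. -/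
open Finsupp

noncomputable section

variable {R S : Type*}

section Aux

open Polynomial

/-- additive subgroup of elements of `x`-degree `< N` -/
def oreF [Ring R] [Ring S] (ι : R →+* S) (x : S) (N : ℕ) : AddSubgroup S :=
  AddSubgroup.closure {s | ∃ i < N, ∃ r, s = ι r * x ^ i}

section gen
variable [Ring R] [Ring S] {ι : R →+* S} {x : S}

theorem oreF_mono {N M : ℕ} (h : N ≤ M) : oreF ι x N ≤ oreF ι x M := by
  apply AddSubgroup.closure_mono
  rintro s ⟨i, hi, r, rfl⟩
  exact ⟨i, by omega, r, rfl⟩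

theorem oreF_mem {N i : ℕ} (h : i < N) (r : R) : ι r * x ^ i ∈ oreF ι x N :=
  AddSubgroup.subset_closure ⟨i, h, r, rfl⟩

theorem oreF_zero {s : S} (h : s ∈ oreF ι x 0) : s = 0 := by
  unfold oreF at h
  simpa using h

theorem oreF_succ {N : ℕ} {s : S} (h : s ∈ oreF ι x (N + 1)) :
    ∃ r, s - ι r * x ^ N ∈ oreF ι x N := by
  unfold oreF at h
  induction h using AddSubgroup.closure_induction with
  | mem s hs =>
    obtain ⟨i, hi, r, rfl⟩ := hs
    rcases Nat.lt_succ_iff_lt_or_eq.1 hi with h | rfl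
    · exact ⟨0, by simpa using oreF_mem h r⟩
    · exact ⟨r, by simp [AddSubgroup.zero_mem]⟩
  | zero => exact ⟨0, by simp [AddSubgroup.zero_mem]⟩
  | add s t _ _ h1 h2 =>
    obtain ⟨r, hr⟩ := h1
    obtain ⟨r', hr'⟩ := h2
    refine ⟨r + r', ?_⟩
    convert AddSubgroup.add_mem _ hr hr' using 1
    rw [map_add]; noncomm_ring
  | neg s _ h1 =>
    obtain ⟨r, hr⟩ := h1
    refine ⟨-r, ?_⟩
    convert AddSubgroup.neg_mem _ hr using 1
    rw [map_neg]; noncomm_ring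

theorem oreF_repr {N : ℕ} {s : S} (h : s ∈ oreF ι x N) :
    ∃ c : ℕ →₀ R, (∀ i, N ≤ i → c i = 0) ∧ s = c.sum fun i r => ι r * x ^ i := by
  unfold oreF at h
  induction h using AddSubgroup.closure_induction with
  | mem s hs =>
    obtain ⟨i, hi, r, rfl⟩ := hs
    refine ⟨Finsupp.single i r, ?_, by simp⟩
    intro j hj
    exact Finsupp.single_eq_of_ne (by omega)
  | zero => exact ⟨0, by simp, by simp⟩
  | add s t _ _ h1 h2 =>
    obtain ⟨c, hc, rfl⟩ := h1
    obtain ⟨c', hc', rfl⟩ := h2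
    refine ⟨c + c', fun i hi => by simp [hc i hi, hc' i hi], ?_⟩
    rw [Finsupp.sum_add_index'] <;> simp [add_mul]
  | neg s _ h1 =>
    obtain ⟨c, hc, rfl⟩ := h1
    refine ⟨-c, fun i hi => by simp [hc i hi], ?_⟩
    rw [Finsupp.sum_neg_index] <;> simp [Finsupp.sum]

theorem oreF_indep (hu : ∀ s : S, ∃! c : ℕ →₀ R, s = c.sum fun i r => ι r * x ^ i)
    {N : ℕ} {r : R} (h : ι r * x ^ N ∈ oreF ι x N) : r = 0 := by
  obtain ⟨c, hc, hs⟩ := oreF_repr h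
  have := (hu _).unique hs (y₂ := Finsupp.single N r) (by simp)
  have h2 := hc N le_rfl
  rw [this] at h2
  simpa using h2

theorem oreF_exists (hu : ∀ s : S, ∃! c : ℕ →₀ R, s = c.sum fun i r => ι r * x ^ i)
    (s : S) : ∃ N, s ∈ oreF ι x N := by
  obtain ⟨c, hc, -⟩ := hu s
  refine ⟨c.support.sup id + 1, ?_⟩
  rw [hc]
  refine AddSubgroup.sum_mem _ fun i hi => oreF_mem ?_ _
  exact Nat.lt_succ_of_le (Finset.le_sup (f := id) hi)

theorem oreF_mul_pow {N : ℕ} {s : S} (h : s ∈ oreF ι x N) (j : ℕ) :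
    s * x ^ j ∈ oreF ι x (N + j) := by
  unfold oreF at h
  induction h using AddSubgroup.closure_induction with
  | mem s hs =>
    obtain ⟨i, hi, r, rfl⟩ := hs
    rw [mul_assoc, ← pow_add]
    exact oreF_mem (by omega) r
  | zero => simp [AddSubgroup.zero_mem]
  | add s t _ _ h1 h2 => rw [add_mul]; exact AddSubgroup.add_mem _ h1 h2
  | neg s _ h1 => rw [neg_mul]; exact AddSubgroup.neg_mem _ h1

theorem oreF_left {N : ℕ} {s : S} (h : s ∈ oreF ι x N) (r : R) :
    ι r * s ∈ oreF ι x N := by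
  unfold oreF at h
  induction h using AddSubgroup.closure_induction with
  | mem s hs =>
    obtain ⟨i, hi, r, rfl⟩ := hs
    rw [← mul_assoc, ← map_mul]
    exact oreF_mem (by omega) _
  | zero => simp [AddSubgroup.zero_mem]
  | add s t _ _ h1 h2 => rw [mul_add]; exact AddSubgroup.add_mem _ h1 h2
  | neg s _ h1 => rw [mul_neg]; exact AddSubgroup.neg_mem _ h1

end gen

section weyl
variable {K : Type*} [Field K] [Ring S] {ι : K[X] →+* S} {x : S}

theorem oreW_x (hc : ∀ r, x * ι r = ι r * x + ι (derivative r))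
    {N : ℕ} {s : S} (h : s ∈ oreF ι x N) : x * s ∈ oreF ι x (N + 1) := by
  unfold oreF at h
  induction h using AddSubgroup.closure_induction with
  | mem s hs =>
    obtain ⟨i, hi, r, rfl⟩ := hs
    rw [← mul_assoc, hc, add_mul, mul_assoc, ← pow_succ']
    exact AddSubgroup.add_mem _ (oreF_mem (by omega) _) (oreF_mem (by omega) _)
  | zero => simp [AddSubgroup.zero_mem]
  | add s t _ _ h1 h2 => rw [mul_add]; exact AddSubgroup.add_mem _ h1 h2
  | neg s _ h1 => rw [mul_neg]; exact AddSubgroup.neg_mem _ h1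

theorem oreW_xpow (hc : ∀ r, x * ι r = ι r * x + ι (derivative r))
    {N : ℕ} {s : S} (h : s ∈ oreF ι x N) (j : ℕ) : x ^ j * s ∈ oreF ι x (N + j) := by
  induction j with
  | zero => simpa using h
  | succ j ih =>
    rw [pow_succ', mul_assoc]
    exact oreW_x hc ih

theorem oreW_mul (hc : ∀ r, x * ι r = ι r * x + ι (derivative r))
    {N M : ℕ} {s t : S} (h : s ∈ oreF ι x (N + 1)) (ht : t ∈ oreF ι x (M + 1)) :
    s * t ∈ oreF ι x (N + M + 1) := by
  unfold oreF at h
  induction h using AddSubgroup.closure_induction with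
  | mem s hs =>
    obtain ⟨i, hi, r, rfl⟩ := hs
    rw [mul_assoc]
    exact oreF_left (oreF_mono (by omega) (oreW_xpow hc ht i)) r
  | zero => simp [AddSubgroup.zero_mem]
  | add s t _ _ h1 h2 => rw [add_mul]; exact AddSubgroup.add_mem _ h1 h2
  | neg s _ h1 => rw [neg_mul]; exact AddSubgroup.neg_mem _ h1

theorem oreW_pow_comm (hc : ∀ r, x * ι r = ι r * x + ι (derivative r)) (r : K[X]) (i : ℕ) :
    x ^ (i + 1) * ι r - ι r * x ^ (i + 1) - ι ((i + 1 : ℕ) * derivative r) * x ^ i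
      ∈ oreF ι x i := by
  induction i with
  | zero => simp [hc, AddSubgroup.zero_mem]
  | succ i ih =>
    have h1 := oreW_x hc ih
    have h2 : ι ((i + 1 : ℕ) * derivative (derivative r)) * x ^ i ∈ oreF ι x (i + 1) :=
      oreF_mem (by omega) _
    convert AddSubgroup.add_mem _ h1 h2 using 1
    have e1 : x * (ι r * x ^ (i + 1)) = ι r * x ^ (i + 2) + ι (derivative r) * x ^ (i + 1) := by
      rw [← mul_assoc, hc, add_mul, mul_assoc, ← pow_succ']
    have e2 : x * (ι ((i + 1 : ℕ) * derivative r) * x ^ i)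
        = ι ((i + 1 : ℕ) * derivative r) * x ^ (i + 1)
          + ι ((i + 1 : ℕ) * derivative (derivative r)) * x ^ i := by
      rw [← mul_assoc, hc, add_mul, mul_assoc, ← pow_succ', derivative_natCast_mul]
    rw [mul_sub, mul_sub, e1, e2, ← mul_assoc, ← pow_succ']
    have e3 : ι (((i + 1 + 1 : ℕ) : K[X]) * derivative r)
      = ι (((i + 1 : ℕ) : K[X]) * derivative r) + ι (derivative r) := by
      rw [← map_add]; congr 1; push_cast; ring
    rw [e3, add_mul]
    abel

theorem oreW_mono_mul (hc : ∀ r, x * ι r = ι r * x + ι (derivative r)) (r t : K[X])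
    {i j N : ℕ} (hij : i + j = N + 1) :
    (ι r * x ^ i) * (ι t * x ^ j) - ι (r * t) * x ^ (N + 1)
      - ι (i * (r * derivative t)) * x ^ N ∈ oreF ι x N := by
  cases i with
  | zero =>
    obtain rfl : j = N + 1 := by omega
    simp [mul_assoc, AddSubgroup.zero_mem]
  | succ i =>
    obtain rfl : N = i + j := by omega
    have h1 := oreF_left (oreF_mul_pow (oreW_pow_comm hc t i) j) r
    convert h1 using 1
    have e : ι (((i + 1 : ℕ) : K[X]) * (r * derivative t))
      = ι r * ι (((i + 1 : ℕ) : K[X]) * derivative t) := by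
      rw [← map_mul]; congr 1; ring
    rw [e, map_mul, show i + j + 1 = (i + 1) + j by ring, pow_add x (i+1) j, pow_add x i j]
    simp only [mul_sub, sub_mul, mul_assoc]

theorem oreW_mono_comm (hc : ∀ r, x * ι r = ι r * x + ι (derivative r)) (r t : K[X])
    {i j N : ℕ} (hij : i + j = N + 1) :
    ((ι r * x ^ i) * (ι t * x ^ j) - (ι t * x ^ j) * (ι r * x ^ i))
      - ι (i * (r * derivative t) - j * (t * derivative r)) * x ^ N ∈ oreF ι x N := by
  have h1 := oreW_mono_mul hc r t hij
  have h2 := oreW_mono_mul hc t r (show j + i = N + 1 by omega)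
  convert AddSubgroup.sub_mem _ h1 h2 using 1
  rw [map_sub, mul_comm t r, sub_mul]
  abel

theorem oreW_comm (hc : ∀ r, x * ι r = ι r * x + ι (derivative r))
    {n m : ℕ} {s t : S} (hs : s ∈ oreF ι x n) (ht : t ∈ oreF ι x m) :
    s * t - t * s ∈ oreF ι x (n + m - 2) := by
  unfold oreF at hs
  induction hs using AddSubgroup.closure_induction with
  | mem s hs =>
    obtain ⟨i, hi, r, rfl⟩ := hs
    unfold oreF at ht
    induction ht using AddSubgroup.closure_induction with
    | mem t ht =>
      obtain ⟨j, hj, r', rfl⟩ := ht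
      rcases Nat.eq_zero_or_pos (i + j) with h0 | h0
      · obtain ⟨rfl, rfl⟩ : i = 0 ∧ j = 0 := by omega
        simp [← map_mul, mul_comm r r', AddSubgroup.zero_mem]
      · obtain ⟨N, hN⟩ : ∃ N, i + j = N + 1 := ⟨i + j - 1, by omega⟩
        have h1 := oreW_mono_comm hc r r' hN
        have h2 : ι (i * (r * derivative r') - j * (r' * derivative r)) * x ^ N
          ∈ oreF ι x (N + 1) := oreF_mem (by omega) _
        have h3 := AddSubgroup.add_mem _ (oreF_mono (Nat.le_succ N) h1) h2
        rw [sub_add_cancel] at h3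
        exact oreF_mono (by omega) h3
    | zero => simp [AddSubgroup.zero_mem]
    | add t u _ _ h1 h2 =>
      convert AddSubgroup.add_mem _ h1 h2 using 1
      noncomm_ring
    | neg t _ h1 =>
      convert AddSubgroup.neg_mem _ h1 using 1
      noncomm_ring
  | zero => simp [AddSubgroup.zero_mem]
  | add s u _ _ h1 h2 =>
    convert AddSubgroup.add_mem _ h1 h2 using 1
    noncomm_ring
  | neg s _ h1 =>
    convert AddSubgroup.neg_mem _ h1 using 1
    noncomm_ring

theorem oreW_lead (hu : ∀ s : S, ∃! c : ℕ →₀ K[X], s = c.sum fun i r => ι r * x ^ i)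
    (hc : ∀ r, x * ι r = ι r * x + ι (derivative r))
    {n m : ℕ} {s t : S} {α β : K[X]} (hn : 0 < n) (hs : s - ι α * x ^ n ∈ oreF ι x n)
    (ht : t - ι β * x ^ m ∈ oreF ι x m) (hst : s * t = t * s) :
    n * (α * derivative β) = m * (β * derivative α) := by
  obtain ⟨N, hN⟩ : ∃ N, n + m = N + 1 := ⟨n + m - 1, by omega⟩
  have ht1 : t ∈ oreF ι x (m + 1) := by
    have := AddSubgroup.add_mem _ (oreF_mono (Nat.le_succ m) ht)
      (oreF_mem (ι := ι) (x := x) (Nat.lt_succ_self m) β)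
    rwa [sub_add_cancel] at this
  have h1 := oreW_mono_comm hc α β hN
  have h2 := oreW_comm hc (oreF_mem (ι := ι) (x := x) (Nat.lt_succ_self n) α) ht
  have h3 := oreW_comm hc hs ht1
  have h2' := oreF_mono (show _ ≤ N by omega) h2
  have h3' := oreF_mono (show _ ≤ N by omega) h3
  have h4 := AddSubgroup.neg_mem _
    (AddSubgroup.add_mem _ (AddSubgroup.add_mem _ h1 h2') h3')
  rw [← sub_eq_zero]
  refine oreF_indep hu (N := N) ?_
  convert h4 using 1
  have : s * t - t * s = 0 := sub_eq_zero.2 hst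
  rw [eq_comm, ← sub_eq_zero, ← neg_eq_zero, ← this]
  noncomm_ring

theorem wronsk_natDegree [CharZero K] {f g : K[X]} (hf : f ≠ 0) (hg : g ≠ 0)
    (h : derivative f * g = f * derivative g) : f.natDegree = g.natDegree := by
  by_cases h0 : f.natDegree = 0
  · rw [derivative_eq_zero.2 h0, zero_mul, eq_comm, mul_eq_zero] at h
    rw [h0, derivative_eq_zero.1 (h.resolve_left hf)]
  by_cases h1 : g.natDegree = 0
  · rw [derivative_eq_zero.2 h1, mul_zero, mul_eq_zero] at h
    exact absurd (derivative_eq_zero.1 (h.resolve_right hg)) h0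
  have h2 := congrArg leadingCoeff h
  rw [leadingCoeff_mul, leadingCoeff_mul, leadingCoeff_derivative, leadingCoeff_derivative] at h2
  have hf' : f.leadingCoeff ≠ 0 := by simpa
  have hg' : g.leadingCoeff ≠ 0 := by simpa
  have h3 : f.leadingCoeff * g.leadingCoeff * ((f.natDegree : K) - g.natDegree) = 0 := by
    linear_combination h2
  rw [mul_eq_zero, mul_eq_zero] at h3
  have := h3.resolve_left (by simp [hf, hg])
  exact_mod_cast sub_eq_zero.1 this

theorem wronsk_prop [CharZero K] {f g : K[X]} (hg : g ≠ 0)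
    (h : derivative f * g = f * derivative g) : ∃ c : K, f = C c * g := by
  by_cases hf : f = 0
  · exact ⟨0, by simp [hf]⟩
  have hd := wronsk_natDegree hf hg h
  have hg' : g.leadingCoeff ≠ 0 := by simpa
  have hf' : f.leadingCoeff ≠ 0 := by simpa
  refine ⟨f.leadingCoeff / g.leadingCoeff, ?_⟩
  set c := f.leadingCoeff / g.leadingCoeff with hcdef
  by_contra hne
  have hne' : f - C c * g ≠ 0 := sub_ne_zero.2 hne
  have hc0 : c ≠ 0 := div_ne_zero hf' hg'
  have hW : derivative (f - C c * g) * g = (f - C c * g) * derivative g := by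
    simp only [derivative_sub, derivative_mul, derivative_C]
    linear_combination h
  have hd2 := wronsk_natDegree hne' hg hW
  have hlt : (f - C c * g).degree < f.degree := by
    apply degree_sub_lt
    · rw [degree_C_mul hc0, degree_eq_natDegree hf, degree_eq_natDegree hg, hd]
    · exact hf
    · rw [leadingCoeff_mul, leadingCoeff_C, hcdef, div_mul_cancel₀ _ hg']
  rw [degree_eq_natDegree hne', degree_eq_natDegree hf, hd2, hd] at hlt
  exact lt_irrefl _ hlt

/-- counting lemma -/
theorem count_dep [Algebra K S] (a b : S) (d : ℕ) (u : ℕ → S)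
    (h : ∀ i j, a ^ i * b ^ j ∈ Submodule.span K (u '' Set.Iio (d * (i + j) + 1))) :
    ∃ l : ℕ × ℕ →₀ K, l ≠ 0 ∧ (l.sum fun p c => c • (a ^ p.1 * b ^ p.2)) = 0 := by
  classical
  by_contra hcon
  push Not at hcon
  have hli : LinearIndependent K (fun p : ℕ × ℕ => a ^ p.1 * b ^ p.2) := by
    rw [linearIndependent_iff]
    intro l hl
    by_contra hl0
    exact hcon l hl0 hl
  let M := 2 * d + 1
  let e : Fin (M + 1) × Fin (M + 1) → ℕ × ℕ := fun p => (p.1, p.2)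
  have he : Function.Injective e := by
    rintro ⟨p, p'⟩ ⟨r, r'⟩ h
    simp only [e, Prod.mk.injEq] at h
    exact Prod.ext (Fin.ext h.1) (Fin.ext h.2)
  have hli2 := hli.comp e he
  let w : Finset S := (Finset.range (d * (2 * M) + 1)).image u
  have hle := linearIndependent_le_span_aux' _ hli2 (w : Set S) (by
    rintro _ ⟨p, rfl⟩
    refine Submodule.span_mono ?_ (h p.1 p.2)
    rintro _ ⟨i, hi, rfl⟩
    simp only [w, Finset.coe_image, Finset.coe_range]
    refine ⟨i, ?_, rfl⟩
    have h1 := p.1.2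
    have h2 := p.2.2
    have h3 : d * (p.1 + p.2) ≤ d * (2 * M) := Nat.mul_le_mul_left _ (by omega)
    simp only [Set.mem_Iio] at hi ⊢
    omega)
  have hw : w.card ≤ d * (2 * M) + 1 := by
    simpa using (Finset.card_image_le (s := Finset.range (d * (2 * M) + 1)) (f := u))
  simp only [Fintype.card_prod, Fintype.card_fin, Finset.coe_sort_coe, Fintype.card_coe] at hle
  have : (M + 1) * (M + 1) ≤ d * (2 * M) + 1 := hle.trans hw
  simp only [M] at this
  nlinarith

theorem oreW_span [CharZero K] [Algebra K S]
    (hu : ∀ s : S, ∃! c : ℕ →₀ K[X], s = c.sum fun i r => ι r * x ^ i)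
    (hc : ∀ r, x * ι r = ι r * x + ι (derivative r))
    (hal : ∀ c : K, algebraMap K S c = ι (C c))
    {n : ℕ} (hn : 0 < n) {e : S} (he : e ∈ oreF ι x (n + 1)) (he' : e ∉ oreF ι x n) :
    ∃ u : ℕ → S, ∀ N s, s ∈ oreF ι x N → e * s = s * e →
      s ∈ Submodule.span K (u '' Set.Iio N) := by
  obtain ⟨α, hα⟩ := oreF_succ he
  have hα0 : α ≠ 0 := by
    rintro rfl
    apply he'
    simpa using hα
  have key : ∀ N, ∃ u : S, ∀ s, s ∈ oreF ι x (N + 1) → e * s = s * e →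
      ∃ c : K, s - c • u ∈ oreF ι x N ∧ e * (s - c • u) = (s - c • u) * e := by
    intro N
    by_cases hex : ∃ u, u ∈ oreF ι x (N + 1) ∧ e * u = u * e ∧ u ∉ oreF ι x N
    · obtain ⟨u, hu1, hu2, hu3⟩ := hex
      refine ⟨u, fun s hs1 hs2 => ?_⟩
      obtain ⟨γ, hγ⟩ := oreF_succ hu1
      obtain ⟨β, hβ⟩ := oreF_succ hs1
      have hγ0 : γ ≠ 0 := by
        rintro rfl
        apply hu3
        simpa using hγ
      have h1 := oreW_lead hu hc hn hα hβ hs2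
      have h2 := oreW_lead hu hc hn hα hγ hu2
      have hn0 : (n : K[X]) ≠ 0 := by exact_mod_cast hn.ne'
      have hW : derivative β * γ = β * derivative γ := by
        have h3 : (n * α : K[X]) * (derivative β * γ - β * derivative γ) = 0 := by
          linear_combination γ * h1 - β * h2
        exact sub_eq_zero.1 ((mul_eq_zero.1 h3).resolve_left (mul_ne_zero hn0 hα0))
      obtain ⟨c, rfl⟩ := wronsk_prop hγ0 hW
      refine ⟨c, ?_, ?_⟩
      · have h4 := AddSubgroup.sub_mem _ hβ (oreF_left hγ (C c))
        convert h4 using 1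
        rw [Algebra.smul_def, hal, map_mul, mul_sub, mul_assoc]
        abel
      · rw [mul_sub, sub_mul, hs2, mul_smul_comm, smul_mul_assoc, hu2]
    · push Not at hex
      exact ⟨0, fun s h1 h2 => ⟨0, by simpa using hex s h1 h2, by simpa using h2⟩⟩
  choose u hu' using key
  refine ⟨u, fun N => ?_⟩
  induction N with
  | zero =>
    intro s hs _
    rw [oreF_zero hs]
    exact Submodule.zero_mem _
  | succ N ih =>
    intro s hs1 hs2
    obtain ⟨c, h1, h2⟩ := hu' N s hs1 hs2
    have h3 := ih _ h1 h2
    have h4 : s - c • u N ∈ Submodule.span K (u '' Set.Iio (N + 1)) :=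
      Submodule.span_mono (Set.image_mono (Set.Iio_subset_Iio (Nat.le_succ N))) h3
    have h5 : c • u N ∈ Submodule.span K (u '' Set.Iio (N + 1)) :=
      Submodule.smul_mem _ _ (Submodule.subset_span ⟨N, by simp, rfl⟩)
    simpa using Submodule.add_mem _ h4 h5

theorem oreW_pow (hc : ∀ r, x * ι r = ι r * x + ι (derivative r))
    {d : ℕ} {a : S} (ha : a ∈ oreF ι x (d + 1)) (i : ℕ) :
    a ^ i ∈ oreF ι x (d * i + 1) := by
  induction i with
  | zero => simpa using oreF_mem (ι := ι) (x := x) (i := 0) (N := 1) (by omega) 1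
  | succ i ih =>
    rw [pow_succ]
    exact oreF_mono (le_of_eq (by ring)) (oreW_mul hc ih ha)

theorem oreW_main [CharZero K] [Algebra K S]
    (hu : ∀ s : S, ∃! c : ℕ →₀ K[X], s = c.sum fun i r => ι r * x ^ i)
    (hc : ∀ r, x * ι r = ι r * x + ι (derivative r))
    (hal : ∀ c : K, algebraMap K S c = ι (C c)) (a b : S) (hab : a * b = b * a) :
    ∃ l : ℕ × ℕ →₀ K, l ≠ 0 ∧ (l.sum fun p c => c • (a ^ p.1 * b ^ p.2)) = 0 := by
  classical
  have main : ∀ e : S, Commute e a → Commute e b → e ∉ oreF ι x 1 →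
      ∃ l : ℕ × ℕ →₀ K, l ≠ 0 ∧ (l.sum fun p c => c • (a ^ p.1 * b ^ p.2)) = 0 := by
    intro e hea heb he1
    have hex := oreF_exists hu e
    have hn1 : 2 ≤ Nat.find hex := by
      by_contra hlt
      exact he1 (oreF_mono (by omega) (Nat.find_spec hex))
    obtain ⟨n, hn⟩ : ∃ n, Nat.find hex = n + 1 := ⟨Nat.find hex - 1, by omega⟩
    have h1 := Nat.find_spec hex
    have h2 := Nat.find_min hex (m := n) (by omega)
    rw [hn] at h1
    obtain ⟨u, hu'⟩ := oreW_span hu hc hal (show 0 < n by omega) h1 h2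
    obtain ⟨N, hN⟩ := oreF_exists hu a
    obtain ⟨M, hM⟩ := oreF_exists hu b
    have ha : a ∈ oreF ι x (N + M + 1) := oreF_mono (by omega) hN
    have hb : b ∈ oreF ι x (N + M + 1) := oreF_mono (by omega) hM
    refine count_dep a b (N + M) u fun i j => hu' _ _ ?_ ?_
    · exact oreF_mono (le_of_eq (by ring)) (oreW_mul hc (oreW_pow hc ha i) (oreW_pow hc hb j))
    · exact (hea.pow_right i).mul_right (heb.pow_right j)
  by_cases ha : a ∈ oreF ι x 1
  swap
  · exact main a (Commute.refl a) hab ha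
  by_cases hb : b ∈ oreF ι x 1
  swap
  · exact main b hab.symm (Commute.refl b) hb
  obtain ⟨α, hα⟩ := oreF_succ ha
  obtain ⟨β, hβ⟩ := oreF_succ hb
  have hα := sub_eq_zero.1 (oreF_zero hα)
  have hβ := sub_eq_zero.1 (oreF_zero hβ)
  rw [pow_zero, mul_one] at hα hβ
  subst hα hβ
  refine count_dep _ _ (α.natDegree + β.natDegree) (fun i => ι (X ^ i)) fun i j => ?_
  rw [← map_pow, ← map_pow, ← map_mul]
  set p := α ^ i * β ^ j with hp
  have hd : p.natDegree ≤ (α.natDegree + β.natDegree) * (i + j) := by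
    refine natDegree_mul_le.trans ?_
    have h1 := natDegree_pow_le (p := α) (n := i)
    have h2 := natDegree_pow_le (p := β) (n := j)
    nlinarith [Nat.zero_le (α.natDegree * j), Nat.zero_le (β.natDegree * i)]
  rw [p.as_sum_range_C_mul_X_pow, map_sum]
  refine Submodule.sum_mem _ fun m hm => ?_
  rw [map_mul, ← hal, ← Algebra.smul_def]
  refine Submodule.smul_mem _ _ (Submodule.subset_span ⟨m, ?_, rfl⟩)
  rw [Finset.mem_range] at hm
  simp only [Set.mem_Iio]
  omega

end weyl

section fin
variable {K : Type*} [Field K] [Ring S] {ι : K[X] →+* S} {x : S}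

theorem central_of (hu : ∀ s : S, ∃! c : ℕ →₀ K[X], s = c.sum fun i r => ι r * x ^ i)
    {z : S} (h1 : Commute z x) (h2 : ∀ c, Commute z (ι (C c))) (h3 : Commute z (ι X)) (s : S) :
    Commute z s := by
  have h4 : ∀ r, Commute z (ι r) := by
    intro r
    induction r using Polynomial.induction_on' with
    | add p q hp hq => rw [map_add]; exact hp.add_right hq
    | monomial n c =>
      rw [← C_mul_X_pow_eq_monomial, map_mul, map_pow]
      exact (h2 c).mul_right (h3.pow_right n)
  obtain ⟨c, hc, -⟩ := hu s
  rw [hc]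
  exact Commute.sum_right _ _ _ fun i _ => (h4 _).mul_right (h1.pow_right i)

theorem const_central (hu : ∀ s : S, ∃! c : ℕ →₀ K[X], s = c.sum fun i r => ι r * x ^ i)
    (hx : ∀ c, x * ι (C c) = ι (C c) * x) (c : K) (s : S) : Commute (ι (C c)) s := by
  refine central_of hu (hx c).symm (fun d => ?_) ?_ s
  · exact (Commute.all (C c) (C d)).map ι
  · exact (Commute.all (C c) X).map ι

theorem xpow_y (q : K) (hx : ∀ c s, Commute (ι (C c)) s)
    (hy : x * ι X = ι (C q) * ι X * x + 1) (m : ℕ) :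
    x ^ (m + 1) * ι X = ι (C (q ^ (m + 1))) * (ι X * x ^ (m + 1))
      + ι (C (∑ i ∈ Finset.range (m + 1), q ^ i)) * x ^ m := by
  induction m with
  | zero => simp [hy, mul_assoc]
  | succ m ih =>
    rw [pow_succ' x (m + 1), mul_assoc, ih, mul_add, ← mul_assoc x, ← (hx _ x).eq, mul_assoc _ x,
      ← mul_assoc x (ι X), hy, ← mul_assoc x, ← (hx _ x).eq, mul_assoc _ x, ← pow_succ',
      add_mul, mul_add, one_mul, Finset.sum_range_succ _ (m + 1), C_add, map_add,
      pow_succ q (m + 1), C_mul, map_mul, add_mul]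
    simp only [mul_assoc, ← pow_succ']
    abel

theorem x_ypow (q : K) (hx : ∀ c s, Commute (ι (C c)) s)
    (hy : x * ι X = ι (C q) * ι X * x + 1) (m : ℕ) :
    x * ι X ^ (m + 1) = ι (C (q ^ (m + 1))) * (ι X ^ (m + 1) * x)
      + ι (C (∑ i ∈ Finset.range (m + 1), q ^ i)) * ι X ^ m := by
  induction m with
  | zero => simp [hy, mul_assoc]
  | succ m ih =>
    rw [pow_succ (ι X) (m + 1), ← mul_assoc, ih, add_mul, mul_assoc _ _ (ι X),
      mul_assoc _ x, hy, mul_assoc _ _ (ι X), ← pow_succ,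
      mul_add, mul_add, mul_one, Finset.sum_range_succ _ (m + 1), C_add, map_add,
      pow_succ q (m + 1), C_mul, map_mul, add_mul, mul_assoc (ι (C q)),
      ← mul_assoc _ (ι (C q)), ← (hx q (ι X ^ (m + 1))).eq]
    simp only [mul_assoc]
    abel

theorem ore_finite (hu : ∀ s : S, ∃! c : ℕ →₀ K[X], s = c.sum fun i r => ι r * x ^ i)
    {n : ℕ} (hn : 0 < n) (hC : ∀ c, ι (C c) ∈ Subring.center S)
    (hX : ι X ^ n ∈ Subring.center S) (hxn : x ^ n ∈ Subring.center S) :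
    Module.Finite (Subring.center S) S := by
  classical
  refine ⟨⟨(Finset.range n ×ˢ Finset.range n).image (fun p => ι X ^ p.1 * x ^ p.2), ?_⟩⟩
  rw [eq_top_iff]
  rintro s -
  obtain ⟨c, hc, -⟩ := hu s
  rw [hc]
  refine Submodule.sum_mem _ fun m _ => ?_
  generalize c m = r
  dsimp only
  induction r using Polynomial.induction_on' with
  | add p q hp hq => rw [map_add, add_mul]; exact Submodule.add_mem _ hp hq
  | monomial l a =>
    let z : Subring.center S := ⟨_, hC a⟩ * ⟨_, hX⟩ ^ (l / n) * ⟨_, hxn⟩ ^ (m / n)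
    have : ι (monomial l a) * x ^ m = z • (ι X ^ (l % n) * x ^ (m % n)) := by
      have hz : z • (ι X ^ (l % n) * x ^ (m % n))
        = ι (C a) * (ι X ^ n) ^ (l / n) * (x ^ n) ^ (m / n) * (ι X ^ (l % n) * x ^ (m % n)) := rfl
      have hcm : Commute ((x ^ n) ^ (m / n)) (ι X ^ (l % n)) :=
        ((Subring.mem_center_iff.1 (Subring.pow_mem _ hxn (m / n))) _).symm
      rw [hz, mul_assoc, ← mul_assoc ((x ^ n) ^ (m / n)), hcm.eq, ← C_mul_X_pow_eq_monomial,
        map_mul, map_pow]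
      conv_lhs => rw [← Nat.div_add_mod l n, ← Nat.div_add_mod m n]
      simp only [pow_add, pow_mul, mul_assoc]
    rw [this]
    refine Submodule.smul_mem _ _ (Submodule.subset_span ?_)
    simp only [Finset.coe_image, Set.mem_image]
    refine ⟨(l % n, m % n), ?_, rfl⟩
    simp [Nat.mod_lt _ hn]

theorem dep_of_finite [Nontrivial S] [Module.Finite (Subring.center S) S] (a b : S) :
    ∃ c : ℕ × ℕ →₀ S, c ≠ 0 ∧ (∀ p, c p ∈ Set.center S) ∧
      (c.sum fun q z => z * a ^ q.1 * b ^ q.2) = 0 := by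
  classical
  obtain ⟨p, hp, hp0⟩ := IsIntegral.of_finite (Subring.center S) a
  let e : ℕ ↪ ℕ × ℕ := ⟨fun i => (i, 0), fun i j h => (Prod.mk.inj h).1⟩
  let c0 : ℕ →₀ S := Finsupp.onFinset p.support (fun i => (p.coeff i : S)) (by
    intro i hi
    rw [Polynomial.mem_support_iff]
    intro h0
    exact hi (by simp [h0]))
  refine ⟨c0.embDomain e, ?_, ?_, ?_⟩
  · intro h
    have h1 := DFunLike.congr_fun h (e p.natDegree)
    rw [Finsupp.embDomain_apply_self] at h1
    have h2 : (p.coeff p.natDegree : S) = 0 := h1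
    rw [hp.coeff_natDegree] at h2
    exact one_ne_zero h2
  · intro r
    by_cases hr : r ∈ Set.range e
    · obtain ⟨i, rfl⟩ := hr
      rw [Finsupp.embDomain_apply_self]
      exact (p.coeff i).2
    · rw [Finsupp.embDomain_notin_range _ _ _ hr]
      exact Set.zero_mem_center
  · rw [Finsupp.sum_embDomain]
    rw [Finsupp.onFinset_sum _ (by simp), ← hp0, eval₂_eq_sum, Polynomial.sum]
    refine Finset.sum_congr rfl fun i _ => ?_
    change (p.coeff i : S) * a ^ i * b ^ 0 = (p.coeff i : S) * a ^ i
    rw [pow_zero, mul_one]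

end fin

end Aux

open Polynomial in
/-- **Hellström–Silvestrov, Theorem 7.5.** Let `𝕜` be a field, `R = 𝕜[y]`,
`σ` the endomorphism of `R` fixing `𝕜` with `σ(y) = q y`, and `δ` the `σ`-derivation
vanishing on `𝕜` with `δ(y) = 1`, where `q ∈ 𝕜` is a root of unity. Let
`S = R[x; σ, δ]` and `C` the center of `S`. If `a` and `b` are commuting elements of
`S`, then there is a nonzero polynomial `f(s,t)` with coefficients in `C` such that
`f(a,b) = 0`. -/
theorem hellstrom_silvestrov_annihilating {K : Type*} [Field K] [Ring S]
    (q : K) (k : ℕ) (hk : 0 < k) (hq : q ^ k = 1)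
    (σ : K[X] →+* K[X]) (hσC : ∀ a : K, σ (C a) = C a) (hσX : σ X = C q * X)
    (δ : K[X] → K[X]) (hδC : ∀ a : K, δ (C a) = 0) (hδX : δ X = 1)
    (ι : K[X] →+* S) (x : S) (h : IsOreExtension ι σ δ x)
    (a b : S) (hab : a * b = b * a) :
    ∃ c : ℕ × ℕ →₀ S, c ≠ 0 ∧ (∀ p, c p ∈ Set.center S) ∧
      (c.sum fun q z => z * a ^ q.1 * b ^ q.2) = 0 := by
  classical
  have hu := h.repr_uniq
  have hS : Nontrivial S := by
    by_contra hn
    rw [not_nontrivial_iff_subsingleton] at hn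
    have := (hu 0).unique (y₁ := 0) (y₂ := Finsupp.single 0 1)
      (Subsingleton.elim _ _) (Subsingleton.elim _ _)
    have h1 := DFunLike.congr_fun this 0
    simp at h1
  have hcst : ∀ c s, Commute (ι (C c)) s :=
    const_central hu (fun c => by rw [h.comm_rule, hσC, hδC, map_zero, add_zero])
  by_cases hn : ∃ n : ℕ, 0 < n ∧ q ^ n = 1 ∧ ∑ i ∈ Finset.range n, q ^ i = 0
  · obtain ⟨n, hn0, hqn, hsum⟩ := hn
    obtain ⟨m, rfl⟩ : ∃ m, n = m + 1 := ⟨n - 1, by omega⟩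
    have hy : x * ι X = ι (C q) * ι X * x + 1 := by
      rw [h.comm_rule, hσX, hδX, map_mul, map_one]
    have h1 := xpow_y q hcst hy m
    have h2 := x_ypow q hcst hy m
    rw [hqn, hsum, C_1, C_0, map_zero, map_one, zero_mul, add_zero, one_mul] at h1 h2
    have hC : ∀ c, ι (C c) ∈ Subring.center S := fun c =>
      Subring.mem_center_iff.2 fun s => (hcst c s).eq.symm
    have hxn : x ^ (m + 1) ∈ Subring.center S := Subring.mem_center_iff.2 fun s =>
      (central_of hu ((Commute.refl x).pow_left _) (fun c => (hcst c _).symm) h1 s).eq.symm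
    have hX : ι X ^ (m + 1) ∈ Subring.center S := Subring.mem_center_iff.2 fun s =>
      (central_of hu h2.symm (fun c => (hcst c _).symm)
        ((Commute.refl (ι X)).pow_left _) s).eq.symm
    have := ore_finite hu hn0 hC hX hxn
    exact dep_of_finite a b
  · push Not at hn
    have hq1 : q = 1 := by
      by_contra hq1
      have h1 := geom_sum_mul q k
      rw [hq, sub_self, mul_eq_zero] at h1
      exact hn k hk hq (h1.resolve_right (sub_ne_zero.2 hq1))
    subst hq1
    have : CharZero K := by
      refine charZero_of_inj_zero fun n hn0 => ?_
      by_contra h0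
      exact hn n (Nat.pos_of_ne_zero h0) (one_pow n) (by simpa using hn0)
    have hσ : ∀ r, σ r = r := by
      intro r
      have : σ = RingHom.id _ := Polynomial.ringHom_ext (by simpa using hσC) (by simpa using hσX)
      rw [this]; rfl
    have hδ : ∀ r, δ r = derivative r := by
      intro r
      induction r using Polynomial.induction_on with
      | C c => rw [hδC, derivative_C]
      | add p r hp hr => rw [h.deriv_add, hp, hr, derivative_add]
      | monomial n c ih =>
        rw [pow_succ, ← mul_assoc, h.deriv_mul, ih, hδX, hσ, derivative_mul (g := X), derivative_X]
        ring
    let alg : Algebra K S := (ι.comp C).toAlgebra' fun c s => (hcst c s).eq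
    have hal : ∀ c : K, algebraMap K S c = ι (C c) := fun c => rfl
    obtain ⟨l, hl0, hl⟩ := oreW_main hu (fun r => by rw [h.comm_rule, hσ, hδ]) hal a b hab
    refine ⟨l.mapRange (algebraMap K S) (map_zero _), ?_, ?_, ?_⟩
    · intro h0
      apply hl0
      ext p
      have h1 := DFunLike.congr_fun h0 p
      simpa using h1
    · intro p
      rw [Finsupp.mapRange_apply]
      exact Subring.mem_center_iff.2 fun s => (hcst _ s).eq.symm
    · rw [Finsupp.sum_mapRange_index (by simp), ← hl]
      refine Finsupp.sum_congr fun p _ => ?_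
      rw [Algebra.smul_def, mul_assoc]
end
end
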